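/- arXiv:math-ph/0412009 — 3 statements merged into one kernel-verified Lean document; each statement's English description precedes it below -/
import Mathlib

section
/- Interpolating classical-quantum entropy chain: Let ρ₁₂ be a density matrix on H₁⊗H₂, let P^1,…,P^M be positive semidefinite operators on H₁ with ∑_α P^α = id_{H₁}, and let Q^1,…,Q^N be positive semidefinite operators on H₂ with ∑_β Q^β = id_{H₂}. Define S^{cl,Q}[ρ₁₂] = ∑_α S[ Tr₁[(P^α⊗id₂) ρ₁₂] ], S^cl[ρ₁₂] = ∑_{α,β} φ( Tr[(P^α⊗Q^β) ρ₁₂] ), S^cl[ρ₁] = ∑_α φ( Tr[P^α ρ₁] ), and S^cl[ρ₂] = ∑_β φ( Tr[Q^β ρ₂] ), where φ(x) = −x ln x (with φ(0)=0). Then S[ρ₁₂] − S[ρ₁] − S[ρ₂] ≤ S^{cl,Q}[ρ₁₂] − S^cl[ρ₁] − S[ρ₂] ≤ S^cl[ρ₁₂] − S^cl[ρ₁] − S^cl[ρ₂]. -/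
open Matrix Kronecker Real
open scoped ComplexOrder

/-- Von Neumann entropy of a (Hermitian) matrix: the sum of `-λ ln λ` over its
eigenvalues, with the convention `0 ln 0 = 0`. -/
noncomputable def entropy {n : Type*} [Fintype n] [DecidableEq n]
    (A : Matrix n n ℂ) : ℝ :=
  if h : A.IsHermitian then ∑ i, Real.negMulLog (h.eigenvalues i) else 0

/-- Partial trace over the first factor of a twofold tensor product. -/
noncomputable def ptraceFst {m k : Type*} [Fintype m]
    (ρ : Matrix (m × k) (m × k) ℂ) : Matrix k k ℂ :=
  Matrix.of fun i j => ∑ a : m, ρ (a, i) (a, j)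

/-- Partial trace over the second factor of a twofold tensor product. -/
noncomputable def ptraceSnd {m k : Type*} [Fintype k]
    (ρ : Matrix (m × k) (m × k) ℂ) : Matrix m m ℂ :=
  Matrix.of fun i j => ∑ a : k, ρ (i, a) (j, a)

/-- Partial trace over the first factor of a threefold tensor product
(indexed as `(H₁ ⊗ H₂) ⊗ H₃`). -/
noncomputable def ptraceFst₃ {a b c : Type*} [Fintype a]
    (ρ : Matrix ((a × b) × c) ((a × b) × c) ℂ) : Matrix (b × c) (b × c) ℂ :=
  Matrix.of fun p q => ∑ i : a, ρ ((i, p.1), p.2) ((i, q.1), q.2)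


set_option linter.unusedSectionVars false
set_option linter.unusedVariables false

section Aux
open Filter Topology

/-- diagonalization data -/
def DiagForm {n : Type*} [Fintype n] [DecidableEq n] (U : Matrix n n ℂ) (l : n → ℝ)
    (ρ : Matrix n n ℂ) : Prop :=
  U * Uᴴ = 1 ∧ Uᴴ * U = 1 ∧ ρ = U * diagonal (fun i => (l i : ℂ)) * Uᴴ

variable {n : Type*} [Fintype n] [DecidableEq n]

lemma aux_qf {U V ρ σ : Matrix n n ℂ} {l m : n → ℝ}
    (hρ : DiagForm U l ρ) (hσ : DiagForm V m σ) (Z : Matrix n n ℂ) (t : ℝ) :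
    2 * (Z * ρ).trace.re - (Z * Zᴴ * σ).trace.re - t * (Zᴴ * Z * ρ).trace.re =
    ∑ i, ∑ j, (2 * (l i * ((Vᴴ * Z * U) j i * (Uᴴ * V) i j).re)
      - (m j + t * l i) * Complex.normSq ((Vᴴ * Z * U) j i)) := by
  obtain ⟨hU1, hU2, rfl⟩ := hρ
  obtain ⟨hV1, hV2, rfl⟩ := hσ
  set C := Vᴴ * Z * U with hC
  set W := Uᴴ * V with hW
  have hZ : Z = V * C * Uᴴ := by
    rw [hC]
    calc Z = (V * Vᴴ) * Z * (U * Uᴴ) := by rw [hU1, hV1]; simp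
      _ = _ := by simp only [Matrix.mul_assoc]
  have e1 : (Z * (U * diagonal (fun i => (l i : ℂ)) * Uᴴ)).trace
      = ((C * diagonal (fun i => (l i : ℂ))) * W).trace := by
    rw [hZ, hW]
    calc _ = (V * (C * (Uᴴ * U) * diagonal (fun i => (l i : ℂ)) * Uᴴ)).trace := by
          simp only [Matrix.mul_assoc]
      _ = _ := by rw [hU2, Matrix.trace_mul_comm]; simp [Matrix.mul_assoc]
  have e2 : (Z * Zᴴ * (V * diagonal (fun i => (m i : ℂ)) * Vᴴ)).trace
      = (C * Cᴴ * diagonal (fun i => (m i : ℂ))).trace := by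
    rw [hZ]
    calc _ = (V * (C * (Uᴴ * U) * Cᴴ * (Vᴴ * V) * diagonal (fun i => (m i : ℂ)) * Vᴴ)).trace := by
          simp only [Matrix.mul_assoc, conjTranspose_mul, conjTranspose_conjTranspose]
      _ = (C * Cᴴ * diagonal (fun i => (m i : ℂ)) * (Vᴴ * V)).trace := by
          rw [hU2, hV2, Matrix.trace_mul_comm]
          simp only [Matrix.mul_assoc, hV2, Matrix.mul_one]
      _ = _ := by rw [hV2]; simp
  have e3 : (Zᴴ * Z * (U * diagonal (fun i => (l i : ℂ)) * Uᴴ)).trace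
      = (Cᴴ * C * diagonal (fun i => (l i : ℂ))).trace := by
    rw [hZ]
    calc _ = (U * (Cᴴ * (Vᴴ * V) * C * (Uᴴ * U) * diagonal (fun i => (l i : ℂ)) * Uᴴ)).trace := by
          simp only [Matrix.mul_assoc, conjTranspose_mul, conjTranspose_conjTranspose]
      _ = (Cᴴ * C * diagonal (fun i => (l i : ℂ)) * (Uᴴ * U)).trace := by
          rw [hU2, hV2, Matrix.trace_mul_comm]
          simp only [Matrix.mul_assoc, hU2, Matrix.mul_one]
      _ = _ := by rw [hU2]; simp
  have f1 : ((C * diagonal (fun i => (l i : ℂ))) * W).trace.re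
      = ∑ i, ∑ j, (l i * (C j i * W i j).re) := by
    rw [Finset.sum_comm]
    simp only [Matrix.trace, Matrix.diag, Matrix.mul_apply (N := W), mul_diagonal, Complex.re_sum]
    refine Finset.sum_congr rfl fun i _ => Finset.sum_congr rfl fun j _ => ?_
    simp only [Complex.mul_re, Complex.mul_im, Complex.ofReal_re, Complex.ofReal_im]; ring
  have f2 : (C * Cᴴ * diagonal (fun i => (m i : ℂ))).trace.re
      = ∑ i, ∑ j, m j * Complex.normSq (C j i) := by
    rw [Finset.sum_comm]
    simp only [Matrix.trace, Matrix.diag, mul_diagonal, Matrix.mul_apply (M := C), Finset.sum_mul,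
      Complex.re_sum, conjTranspose_apply]
    refine Finset.sum_congr rfl fun i _ => Finset.sum_congr rfl fun j _ => ?_
    simp [Complex.normSq_apply]; ring
  have f3 : (Cᴴ * C * diagonal (fun i => (l i : ℂ))).trace.re
      = ∑ i, ∑ j, l i * Complex.normSq (C j i) := by
    simp only [Matrix.trace, Matrix.diag, mul_diagonal, Matrix.mul_apply (N := C), Finset.sum_mul,
      Complex.re_sum, conjTranspose_apply]
    refine Finset.sum_congr rfl fun i _ => Finset.sum_congr rfl fun j _ => ?_
    simp [Complex.normSq_apply]; ring
  rw [e1, e2, e3, f1, f2, f3]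
  simp only [Finset.mul_sum, ← Finset.sum_sub_distrib]
  refine Finset.sum_congr rfl fun i _ => Finset.sum_congr rfl fun j _ => ?_
  ring

lemma aux_upper {U V ρ σ : Matrix n n ℂ} {l m : n → ℝ}
    (hρ : DiagForm U l ρ) (hσ : DiagForm V m σ) (hl : ∀ i, 0 ≤ l i) (hm : ∀ i, 0 ≤ m i)
    (Z : Matrix n n ℂ) {t : ℝ} (ht : 0 < t) :
    2 * (Z * ρ).trace.re - (Z * Zᴴ * σ).trace.re - t * (Zᴴ * Z * ρ).trace.re ≤
    ∑ i, ∑ j, Complex.normSq ((Uᴴ * V) i j) * (l i ^ 2 / (m j + t * l i)) := by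
  rw [aux_qf hρ hσ]
  refine Finset.sum_le_sum fun i _ => Finset.sum_le_sum fun j _ => ?_
  rcases (hl i).eq_or_lt with h | h
  · rw [← h]
    have := mul_nonneg (hm j) (Complex.normSq_nonneg ((Vᴴ * Z * U) j i))
    simp; linarith
  · have hp : 0 < m j + t * l i := by have := hm j; positivity
    generalize (Vᴴ * Z * U) j i = z
    generalize (Uᴴ * V) i j = w
    rw [← mul_div_assoc, le_div_iff₀ hp]
    simp only [Complex.normSq_apply, Complex.mul_re]
    nlinarith [sq_nonneg (l i * w.re - (m j + t * l i) * z.re),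
      sq_nonneg (l i * w.im + (m j + t * l i) * z.im)]

lemma aux_attain {U V ρ σ : Matrix n n ℂ} {l m : n → ℝ}
    (hρ : DiagForm U l ρ) (hσ : DiagForm V m σ) (hl : ∀ i, 0 ≤ l i) (hm : ∀ i, 0 ≤ m i)
    {t : ℝ} (ht : 0 < t) : ∃ Z : Matrix n n ℂ, 
    2 * (Z * ρ).trace.re - (Z * Zᴴ * σ).trace.re - t * (Zᴴ * Z * ρ).trace.re =
    ∑ i, ∑ j, Complex.normSq ((Uᴴ * V) i j) * (l i ^ 2 / (m j + t * l i)) := by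
  let C : Matrix n n ℂ := Matrix.of fun j i => ((l i / (m j + t * l i) : ℝ) : ℂ) * star ((Uᴴ * V) i j)
  have hC : Vᴴ * (V * C * Uᴴ) * U = C := by
    calc _ = (Vᴴ * V) * C * (Uᴴ * U) := by simp only [Matrix.mul_assoc]
      _ = C := by rw [hρ.2.1, hσ.2.1]; simp
  refine ⟨V * C * Uᴴ, ?_⟩
  rw [aux_qf hρ hσ, hC]
  refine Finset.sum_congr rfl fun i _ => Finset.sum_congr rfl fun j _ => ?_
  simp only [C, Matrix.of_apply]
  generalize (Uᴴ * V) i j = w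
  rcases (hl i).eq_or_lt with h | h
  · rw [← h]; simp
  · have hp : 0 < m j + t * l i := by have := hm j; positivity
    simp only [Complex.normSq_apply, Complex.mul_re, Complex.mul_im, Complex.ofReal_re,
      Complex.ofReal_im, Complex.star_def, Complex.conj_re, Complex.conj_im]
    generalize m j + t * l i = q at *
    field_simp
    ring

lemma aux_row {U V : Matrix n n ℂ} (hU : Uᴴ * U = 1) (hV : V * Vᴴ = 1) (i : n) :
    ∑ j, Complex.normSq ((Uᴴ * V) i j) = 1 := by
  have h : (Uᴴ * V) * (Uᴴ * V)ᴴ = 1 := by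
    rw [conjTranspose_mul, conjTranspose_conjTranspose]
    calc _ = Uᴴ * (V * Vᴴ) * U := by simp only [Matrix.mul_assoc]
      _ = 1 := by rw [hV]; simpa using hU
  have h2 := congrArg Complex.re (congrFun (congrFun h i) i)
  rw [Matrix.mul_apply] at h2
  simpa [Complex.normSq_apply] using h2

lemma aux_col {U V ρ : Matrix n n ℂ} {l : n → ℝ} (hρ : DiagForm U l ρ) (j : n) :
    ∑ i, Complex.normSq ((Uᴴ * V) i j) * l i = ((Vᴴ * ρ * V) j j).re := by
  have h : Vᴴ * ρ * V = (Uᴴ * V)ᴴ * (diagonal (fun i => (l i : ℂ)) * (Uᴴ * V)) := by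
    rw [hρ.2.2, conjTranspose_mul, conjTranspose_conjTranspose]; simp only [Matrix.mul_assoc]
  rw [h, Matrix.mul_apply, Complex.re_sum]
  refine Finset.sum_congr rfl fun i _ => ?_
  rw [diagonal_mul, conjTranspose_apply]
  simp [Complex.normSq_apply]; ring

lemma aux_deriv (a l m t : ℝ) (hl : 0 ≤ l) (hm : 0 ≤ m) (ht : 0 < t) :
    HasDerivAt (fun t => a * (l * Real.log (m + t * l))) (a * (l ^ 2 / (m + t * l))) t := by
  rcases hl.eq_or_lt with h | h
  · simpa [← h] using hasDerivAt_const t (0 : ℝ)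
  · have hp : 0 < m + t * l := by positivity
    have := ((((hasDerivAt_id t).mul_const l).const_add m).log hp.ne').const_mul l |>.const_mul a
    refine this.congr_deriv ?_
    simp only [id, one_mul]
    ring

lemma aux_lim0 (a l m : ℝ) (hl : 0 ≤ l) (hm : 0 ≤ m) (h0 : m = 0 → a * l = 0) :
    Tendsto (fun t => a * (l * Real.log (m + t * l))) (𝓝[>] 0) (𝓝 (a * (l * Real.log m))) := by
  rcases hm.eq_or_lt with h | h
  · have := h0 h.symm
    simp only [← mul_assoc, this, zero_mul]
    exact tendsto_const_nhds
  · have : ContinuousAt (fun t => a * (l * Real.log (m + t * l))) 0 := by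
      have : m + 0 * l ≠ 0 := by simpa using h.ne'
      fun_prop (disch := assumption)
    have h2 := this.tendsto
    simp only [zero_mul, add_zero] at h2
    exact h2.mono_left nhdsWithin_le_nhds

lemma aux_limT (a l m : ℝ) (hl : 0 ≤ l) (hm : 0 ≤ m) :
    Tendsto (fun t => a * (l * Real.log (m + t⁻¹ * l)) + a * l * Real.log t) (𝓝[>] 0)
      (𝓝 (a * (l * Real.log l))) := by
  rcases hl.eq_or_lt with h | h
  · simp [← h]
  · have : ContinuousAt (fun t => a * (l * Real.log (m * t + l))) 0 := by
      have : m * 0 + l ≠ 0 := by simpa using h.ne'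
      fun_prop (disch := assumption)
    have h2 := this.tendsto
    simp only [mul_zero, zero_add] at h2
    refine (h2.mono_left nhdsWithin_le_nhds).congr' ?_
    filter_upwards [self_mem_nhdsWithin] with t ht
    have ht : 0 < t := ht
    have : m + t⁻¹ * l = (m * t + l) / t := by field_simp
    rw [this, Real.log_div (by positivity) ht.ne']
    ring

/-- Scalar comparison -/
lemma aux_scalar {A B : Type*} [Fintype A] [Fintype B] (a l m : A → ℝ) (a' l' m' : B → ℝ)
    (hl : ∀ i, 0 ≤ l i) (hm : ∀ i, 0 ≤ m i) (hl' : ∀ i, 0 ≤ l' i) (hm' : ∀ i, 0 ≤ m' i)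
    (h0 : ∀ i, m i = 0 → a i * l i = 0) (h0' : ∀ i, m' i = 0 → a' i * l' i = 0)
    (htr : ∑ i, a i * l i = ∑ i, a' i * l' i)
    (hG : ∀ t, 0 < t → ∑ i, a' i * (l' i ^ 2 / (m' i + t * l' i)) ≤
      ∑ i, a i * (l i ^ 2 / (m i + t * l i))) :
    ∑ i, a i * (l i * Real.log (m i)) - ∑ i, a' i * (l' i * Real.log (m' i)) ≤
    ∑ i, a i * (l i * Real.log (l i)) - ∑ i, a' i * (l' i * Real.log (l' i)) := by
  let Φ : ℝ → ℝ := fun t => ∑ i, a i * (l i * Real.log (m i + t * l i)) -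
    ∑ i, a' i * (l' i * Real.log (m' i + t * l' i))
  have hd : ∀ t, 0 < t → HasDerivAt Φ (∑ i, a i * (l i ^ 2 / (m i + t * l i)) -
      ∑ i, a' i * (l' i ^ 2 / (m' i + t * l' i))) t := fun t ht =>
    (HasDerivAt.fun_sum fun i _ => aux_deriv _ _ _ _ (hl i) (hm i) ht).sub
    (HasDerivAt.fun_sum fun i _ => aux_deriv _ _ _ _ (hl' i) (hm' i) ht)
  have hmono : MonotoneOn Φ (Set.Ioi 0) := by
    apply monotoneOn_of_deriv_nonneg (convex_Ioi 0)
    · exact fun t ht => (hd t ht).continuousAt.continuousWithinAt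
    · intro t ht
      rw [interior_Ioi] at ht
      exact (hd t ht).differentiableAt.differentiableWithinAt
    · intro t ht
      rw [interior_Ioi] at ht
      rw [(hd t ht).deriv]
      exact sub_nonneg.2 (hG t ht)
  have L0 : Tendsto Φ (𝓝[>] 0) (𝓝 (∑ i, a i * (l i * Real.log (m i)) -
      ∑ i, a' i * (l' i * Real.log (m' i)))) :=
    (tendsto_finsetSum _ fun i _ => aux_lim0 _ _ _ (hl i) (hm i) (h0 i)).sub
    (tendsto_finsetSum _ fun i _ => aux_lim0 _ _ _ (hl' i) (hm' i) (h0' i))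
  have L1 : Tendsto (fun t => Φ t⁻¹) (𝓝[>] 0) (𝓝 (∑ i, a i * (l i * Real.log (l i)) -
      ∑ i, a' i * (l' i * Real.log (l' i)))) := by
    refine ((tendsto_finsetSum _ fun i _ => aux_limT (a i) _ _ (hl i) (hm i)).sub
      (tendsto_finsetSum _ fun i _ => aux_limT (a' i) _ _ (hl' i) (hm' i))).congr fun t => ?_
    simp only [Finset.sum_add_distrib, ← Finset.sum_mul, htr, Φ]
    ring
  refine le_of_tendsto_of_tendsto L0 L1 ?_
  have hev : ∀ᶠ t : ℝ in 𝓝[>] 0, t < 1 := by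
    filter_upwards [Ioo_mem_nhdsGT (zero_lt_one' ℝ)] with t ht using ht.2
  filter_upwards [self_mem_nhdsWithin, hev] with t ht h1
  have ht : 0 < t := ht
  exact hmono ht (inv_pos.2 ht) (h1.le.trans ((one_le_inv₀ ht).2 h1.le))

/-- Abstract data processing. -/
lemma aux_dpi {k ι : Type*} [Fintype k] [DecidableEq k] [Fintype ι]
    {U V ρ σ : Matrix n n ℂ} {l m : n → ℝ}
    (hρ : DiagForm U l ρ) (hσ : DiagForm V m σ) (hl : ∀ i, 0 ≤ l i) (hm : ∀ i, 0 ≤ m i)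
    (h0 : ∀ j, m j = 0 → ((Vᴴ * ρ * V) j j).re = 0)
    {U' V' ρ' σ' : ι → Matrix k k ℂ} {l' m' : ι → k → ℝ}
    (hρ' : ∀ α, DiagForm (U' α) (l' α) (ρ' α)) (hσ' : ∀ α, DiagForm (V' α) (m' α) (σ' α))
    (hl' : ∀ α i, 0 ≤ l' α i) (hm' : ∀ α i, 0 ≤ m' α i)
    (h0' : ∀ α j, m' α j = 0 → (((V' α)ᴴ * ρ' α * V' α) j j).re = 0)
    (htr : ρ.trace = ∑ α, (ρ' α).trace)
    (H : ∀ Y : ι → Matrix k k ℂ, ∃ Z : Matrix n n ℂ,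
      (Z * ρ).trace.re = ∑ α, (Y α * ρ' α).trace.re ∧
      (Z * Zᴴ * σ).trace.re ≤ ∑ α, (Y α * (Y α)ᴴ * σ' α).trace.re ∧
      (Zᴴ * Z * ρ).trace.re ≤ ∑ α, ((Y α)ᴴ * Y α * ρ' α).trace.re) :
    ∑ j, ((Vᴴ * ρ * V) j j).re * Real.log (m j)
      - ∑ α, ∑ j, (((V' α)ᴴ * ρ' α * V' α) j j).re * Real.log (m' α j) ≤
    ∑ α, ∑ i, Real.negMulLog (l' α i) - ∑ i, Real.negMulLog (l i) := by
  have nn : ∀ z : ℂ, 0 ≤ Complex.normSq z := Complex.normSq_nonneg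
  have key := aux_scalar (A := n × n) (B := ι × k × k)
    (fun p => Complex.normSq ((Uᴴ * V) p.1 p.2)) (fun p => l p.1) (fun p => m p.2)
    (fun p => Complex.normSq (((U' p.1)ᴴ * V' p.1) p.2.1 p.2.2)) (fun p => l' p.1 p.2.1)
    (fun p => m' p.1 p.2.2) (fun p => hl _) (fun p => hm _) (fun p => hl' _ _) (fun p => hm' _ _)
    (by
      rintro ⟨i, j⟩ h
      have := h0 j h
      rw [← aux_col hρ, Finset.sum_eq_zero_iff_of_nonneg
        (fun i _ => mul_nonneg (nn _) (hl i))] at this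
      exact this i (Finset.mem_univ _))
    (by
      rintro ⟨α, i, j⟩ h
      have := h0' α j h
      rw [← aux_col (hρ' α), Finset.sum_eq_zero_iff_of_nonneg
        (fun i _ => mul_nonneg (nn _) (hl' α i))] at this
      exact this i (Finset.mem_univ _))
    (by
      have T : ∀ {k : Type _} [Fintype k] [DecidableEq k] {U V ρ : Matrix k k ℂ} {l : k → ℝ},
          DiagForm U l ρ → V * Vᴴ = 1 →
          ∑ i, ∑ j, Complex.normSq ((Uᴴ * V) i j) * l i = ρ.trace.re := by
        intro k _ _ U V ρ l h1 h2
        simp only [← Finset.sum_mul, aux_row h1.2.1 h2, one_mul]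
        rw [h1.2.2, Matrix.mul_assoc, Matrix.trace_mul_comm, Matrix.mul_assoc, h1.2.1]
        simp [Matrix.trace]
      have T' : ∀ α, ∑ i, ∑ j, Complex.normSq (((U' α)ᴴ * V' α) i j) * l' α i
          = (ρ' α).trace.re := by
        intro α
        simp only [← Finset.sum_mul, aux_row (hρ' α).2.1 (hσ' α).1, one_mul]
        rw [(hρ' α).2.2, Matrix.mul_assoc, Matrix.trace_mul_comm, Matrix.mul_assoc, (hρ' α).2.1]
        simp [Matrix.trace]
      simp only [Fintype.sum_prod_type]
      rw [T hρ hσ.1, htr, Complex.re_sum]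
      exact Finset.sum_congr rfl fun α _ => (T' α).symm)
    (by
      intro t ht
      choose Y hY using fun α => aux_attain (hρ' α) (hσ' α) (hl' α) (hm' α) ht
      obtain ⟨Z, h1, h2, h3⟩ := H Y
      have h4 := aux_upper hρ hσ hl hm Z ht
      simp only [Fintype.sum_prod_type]
      refine le_trans ?_ h4
      simp only [← hY, Finset.sum_sub_distrib, ← Finset.mul_sum]
      rw [h1]
      have := mul_le_mul_of_nonneg_left h3 ht.le
      linarith)
  simp only [Fintype.sum_prod_type] at key
  have c1 : ∑ i, ∑ j, Complex.normSq ((Uᴴ * V) i j) * (l i * Real.log (m j)) =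
      ∑ j, ((Vᴴ * ρ * V) j j).re * Real.log (m j) := by
    rw [Finset.sum_comm]
    simp only [← aux_col hρ, Finset.sum_mul]
    simp only [mul_assoc]
  have c2 : ∀ α, ∑ i, ∑ j, Complex.normSq (((U' α)ᴴ * V' α) i j) * (l' α i * Real.log (m' α j)) =
      ∑ j, (((V' α)ᴴ * ρ' α * V' α) j j).re * Real.log (m' α j) := by
    intro α
    rw [Finset.sum_comm]
    simp only [← aux_col (hρ' α), Finset.sum_mul]
    simp only [mul_assoc]
  have c3 : ∑ i, ∑ j, Complex.normSq ((Uᴴ * V) i j) * (l i * Real.log (l i)) =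
      - ∑ i, Real.negMulLog (l i) := by
    simp only [← Finset.sum_mul, aux_row hρ.2.1 hσ.1, one_mul, ← Finset.sum_neg_distrib,
      Real.negMulLog, neg_mul, neg_neg]
  have c4 : ∀ α, ∑ i, ∑ j, Complex.normSq (((U' α)ᴴ * V' α) i j) * (l' α i * Real.log (l' α i)) =
      - ∑ i, Real.negMulLog (l' α i) := by
    intro α
    simp only [← Finset.sum_mul, aux_row (hρ' α).2.1 (hσ' α).1, one_mul, ← Finset.sum_neg_distrib,
      Real.negMulLog, neg_mul, neg_neg]
  rw [c1, c3] at key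
  simp only [c2, c4] at key
  rw [Finset.sum_neg_distrib] at key
  linarith

lemma aux_entropy {A : Matrix n n ℂ} (hA : A.PosSemidef) :
    ∃ U l, DiagForm U l A ∧ (∀ i, 0 ≤ l i) ∧ entropy A = ∑ i, Real.negMulLog (l i) := by
  refine ⟨hA.1.eigenvectorUnitary, hA.1.eigenvalues, ⟨?_, ?_, ?_⟩, hA.eigenvalues_nonneg, ?_⟩
  · exact Unitary.coe_mul_star_self _
  · exact Unitary.coe_star_mul_self _
  · exact hA.1.spectral_theorem
  · rw [entropy, dif_pos hA.1]

open scoped MatrixOrder in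
lemma aux_sq {A : Matrix n n ℂ} (hA : A.PosSemidef) : ∃ C : Matrix n n ℂ, A = Cᴴ * C :=
  (CStarAlgebra.nonneg_iff_eq_star_mul_self (a := A)).1 hA.nonneg

lemma aux_tn {A B : Matrix n n ℂ} (hA : A.PosSemidef) (hB : B.PosSemidef) :
    0 ≤ (A * B).trace := by
  obtain ⟨C, rfl⟩ := aux_sq hA
  rw [Matrix.mul_assoc, Matrix.trace_mul_comm]
  exact (hB.mul_mul_conjTranspose_same C).trace_nonneg

lemma aux_schwarz {ι : Type*} [Fintype ι] {E X : ι → Matrix n n ℂ} (hE : ∀ α, (E α).PosSemidef)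
    (hs : ∑ α, E α = 1) (hc : ∀ α, E α * X α = X α * E α) {σ : Matrix n n ℂ}
    (hσ : σ.PosSemidef) :
    ((∑ α, E α * X α) * (∑ α, E α * X α)ᴴ * σ).trace.re ≤
      ∑ α, (E α * (X α * (X α)ᴴ) * σ).trace.re := by
  set Z := ∑ α, E α * X α with hZ
  have h1 : ∑ α, (X α - Z) * E α * (X α - Z)ᴴ = ∑ α, E α * (X α * (X α)ᴴ) - Z * Zᴴ := by
    have : ∀ α, (X α - Z) * E α * (X α - Z)ᴴ = E α * (X α * (X α)ᴴ) - (E α * X α) * Zᴴ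
        - Z * (E α * X α)ᴴ + Z * E α * Zᴴ := by
      intro α
      have h2 : (E α * X α)ᴴ = E α * (X α)ᴴ := by
        rw [hc α, conjTranspose_mul, (hE α).1.eq]
      rw [h2, ← Matrix.mul_assoc (E α), hc α, conjTranspose_sub]
      noncomm_ring
    simp only [this, Finset.sum_add_distrib, Finset.sum_sub_distrib, ← Finset.sum_mul,
      ← Finset.mul_sum, ← conjTranspose_sum, hs, ← hZ]
    noncomm_ring
  have h2 : (∑ α, (X α - Z) * E α * (X α - Z)ᴴ).PosSemidef :=
    posSemidef_sum _ fun α _ => (hE α).mul_mul_conjTranspose_same _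
  have h3 := (Complex.le_def.1 (aux_tn h2 hσ)).1
  rw [h1, Matrix.sub_mul, trace_sub, Finset.sum_mul, trace_sum, Complex.sub_re,
    Complex.re_sum] at h3
  simp only [Complex.zero_re] at h3
  linarith

lemma aux_schwarz' {ι : Type*} [Fintype ι] {E X : ι → Matrix n n ℂ} (hE : ∀ α, (E α).PosSemidef)
    (hs : ∑ α, E α = 1) (hc : ∀ α, E α * X α = X α * E α) {σ : Matrix n n ℂ}
    (hσ : σ.PosSemidef) :
    ((∑ α, E α * X α)ᴴ * (∑ α, E α * X α) * σ).trace.re ≤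
      ∑ α, (E α * ((X α)ᴴ * (X α)) * σ).trace.re := by
  have hc' : ∀ α, E α * (X α)ᴴ = (X α)ᴴ * E α := by
    intro α
    have := congrArg conjTranspose (hc α)
    simpa [conjTranspose_mul, (hE α).1.eq] using this.symm
  have h := aux_schwarz (X := fun α => (X α)ᴴ) hE hs hc' hσ
  have hz : ∑ α, E α * (X α)ᴴ = (∑ α, E α * X α)ᴴ := by
    rw [conjTranspose_sum]
    refine Finset.sum_congr rfl fun α _ => ?_
    rw [conjTranspose_mul, (hE α).1.eq, hc']
  simpa [hz] using h

variable {k : Type*} [Fintype k] [DecidableEq k]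

lemma aux_pt (A : Matrix n n ℂ) (Y : Matrix k k ℂ) (ρ : Matrix (n × k) (n × k) ℂ) :
    (Y * ptraceFst ((A ⊗ₖ (1 : Matrix k k ℂ)) * ρ)).trace = ((A ⊗ₖ Y) * ρ).trace := by
  have h : A ⊗ₖ Y = ((1 : Matrix n n ℂ) ⊗ₖ Y) * (A ⊗ₖ (1 : Matrix k k ℂ)) := by
    rw [← mul_kronecker_mul]; simp
  rw [h, Matrix.mul_assoc]
  generalize (A ⊗ₖ (1 : Matrix k k ℂ)) * ρ = R
  have h2 : ∀ a i, (((1 : Matrix n n ℂ) ⊗ₖ Y) * R) (a, i) (a, i) = ∑ y, Y i y * R (a, y) (a, i) := by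
    intro a i
    simp [Matrix.mul_apply, Fintype.sum_prod_type, Matrix.one_apply, ite_mul]
  simp only [Matrix.trace, Matrix.diag, Fintype.sum_prod_type, h2, Matrix.mul_apply (M := Y),
    ptraceFst, Matrix.of_apply, Finset.mul_sum]
  conv_rhs => rw [Finset.sum_comm]
  exact Finset.sum_congr rfl fun i _ => Finset.sum_comm

lemma aux_ptFst_psd {ρ : Matrix (n × k) (n × k) ℂ} (hρ : ρ.PosSemidef) :
    (ptraceFst ρ).PosSemidef := by
  have : ptraceFst ρ = ∑ a, ρ.submatrix (fun i => (a, i)) (fun i => (a, i)) := by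
    ext i j; simp [ptraceFst, Matrix.sum_apply]
  rw [this]
  exact posSemidef_sum _ fun a _ => hρ.submatrix _

lemma aux_ptSnd_psd {ρ : Matrix (n × k) (n × k) ℂ} (hρ : ρ.PosSemidef) :
    (ptraceSnd ρ).PosSemidef := by
  have : ptraceSnd ρ = ∑ a, ρ.submatrix (fun i => (i, a)) (fun i => (i, a)) := by
    ext i j; simp [ptraceSnd, Matrix.sum_apply]
  rw [this]
  exact posSemidef_sum _ fun a _ => hρ.submatrix _

lemma aux_pt_cyc (B : Matrix n n ℂ) (R : Matrix (n × k) (n × k) ℂ) :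
    ptraceFst ((B ⊗ₖ (1 : Matrix k k ℂ)) * R) = ptraceFst (R * (B ⊗ₖ (1 : Matrix k k ℂ))) := by
  ext i j
  simp only [ptraceFst, Matrix.mul_apply, Fintype.sum_prod_type, Matrix.of_apply,
    kroneckerMap_apply, Matrix.one_apply, mul_ite, ite_mul, mul_one, mul_zero, zero_mul,
    Finset.sum_ite_eq, Finset.sum_ite_eq', Finset.mem_univ, if_true]
  rw [Finset.sum_comm]
  exact Finset.sum_congr rfl fun _ _ => Finset.sum_congr rfl fun _ _ => mul_comm _ _

lemma aux_pt_psd {A : Matrix n n ℂ} (hA : A.PosSemidef) {ρ : Matrix (n × k) (n × k) ℂ}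
    (hρ : ρ.PosSemidef) : (ptraceFst ((A ⊗ₖ (1 : Matrix k k ℂ)) * ρ)).PosSemidef := by
  obtain ⟨C, rfl⟩ := aux_sq hA
  have h : (Cᴴ * C) ⊗ₖ (1 : Matrix k k ℂ) = (Cᴴ ⊗ₖ 1) * (C ⊗ₖ (1 : Matrix k k ℂ)) := by
    rw [← mul_kronecker_mul, Matrix.one_mul]
  rw [h, Matrix.mul_assoc, aux_pt_cyc]
  have h2 : (Cᴴ ⊗ₖ (1 : Matrix k k ℂ)) = (C ⊗ₖ (1 : Matrix k k ℂ))ᴴ := by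
    rw [conjTranspose_kronecker]; simp
  rw [h2]
  exact aux_ptFst_psd (hρ.mul_mul_conjTranspose_same _)

lemma aux_snd (A B : Matrix n n ℂ) (ρ : Matrix (n × k) (n × k) ℂ) :
    ptraceSnd ((A ⊗ₖ (1 : Matrix k k ℂ)) * ρ * (B ⊗ₖ (1 : Matrix k k ℂ))) = A * ptraceSnd ρ * B := by
  ext i j
  simp only [ptraceSnd, Matrix.mul_apply, Fintype.sum_prod_type, Matrix.of_apply,
    kroneckerMap_apply, Matrix.one_apply, mul_ite, ite_mul, mul_one, mul_zero, zero_mul,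
    Finset.sum_ite_eq, Finset.sum_ite_eq', Finset.mem_univ, if_true, Finset.mul_sum, Finset.sum_mul]
  rw [Finset.sum_comm]
  refine Finset.sum_congr rfl fun _ _ => ?_
  rw [Finset.sum_comm]

lemma aux_fst_kron (A : Matrix n n ℂ) :
    ptraceFst (A ⊗ₖ (1 : Matrix k k ℂ)) = A.trace • (1 : Matrix k k ℂ) := by
  ext i j
  simp [ptraceFst, Matrix.trace, Matrix.diag, Finset.sum_mul, kroneckerMap_apply]

lemma aux_trSnd (A : Matrix n n ℂ) (ρ : Matrix (n × k) (n × k) ℂ) :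
    (A * ptraceSnd ρ).trace = (ptraceFst ((A ⊗ₖ (1 : Matrix k k ℂ)) * ρ)).trace := by
  have h := aux_pt A 1 ρ
  have h2 := aux_snd A 1 ρ
  rw [Matrix.one_mul] at h
  rw [h, ← Matrix.mul_one (A * ptraceSnd ρ), ← h2]
  simp [ptraceSnd, Matrix.trace, Fintype.sum_prod_type]

lemma aux_diag_one (c : ℂ) (hc : 0 ≤ c) :
    DiagForm (1 : Matrix k k ℂ) (fun _ => c.re) (c • 1) := by
  refine ⟨by simp, by simp, ?_⟩
  have : ((c.re : ℝ) : ℂ) = c := by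
    rw [Complex.le_def] at hc
    apply Complex.ext <;> simp [← hc.2]
  ext i j
  simp [this, Matrix.one_apply]

lemma aux_nonneg {c : ℂ} (hc : 0 ≤ c) : 0 ≤ c.re := (Complex.le_def.1 hc).1

lemma aux_ptsum {ι : Type*} [Fintype ι] (P : ι → Matrix n n ℂ) (hP : ∑ α, P α = 1)
    (ρ : Matrix (n × k) (n × k) ℂ) :
    ∑ α, ptraceFst ((P α ⊗ₖ (1 : Matrix k k ℂ)) * ρ) = ptraceFst ρ := by
  have h1 : ∑ α, (P α ⊗ₖ (1 : Matrix k k ℂ)) = 1 := by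
    rw [← one_kronecker_one, ← hP]
    ext ⟨i, i'⟩ ⟨j, j'⟩
    simp [Matrix.sum_apply, Finset.sum_mul]
  have h2 : ∀ f : ι → Matrix (n × k) (n × k) ℂ, ∑ α, ptraceFst (f α) = ptraceFst (∑ α, f α) := by
    intro f
    ext i j
    simp only [ptraceFst, Matrix.sum_apply, Matrix.of_apply]
    rw [Finset.sum_comm]
  rw [h2, ← Finset.sum_mul, h1, Matrix.one_mul]

lemma aux_kron_sum {ι : Type*} [Fintype ι] (P : ι → Matrix n n ℂ) (hP : ∑ α, P α = 1) :
    ∑ α, (P α ⊗ₖ (1 : Matrix k k ℂ)) = 1 := by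
  rw [← one_kronecker_one, ← hP]
  ext ⟨i, i'⟩ ⟨j, j'⟩
  simp [Matrix.sum_apply, Finset.sum_mul]

lemma aux_part1 {ι : Type*} [Fintype ι] {ρ : Matrix (n × k) (n × k) ℂ} (hρ : ρ.PosSemidef)
    {P : ι → Matrix n n ℂ} (hP : ∀ α, (P α).PosSemidef) (hPsum : ∑ α, P α = 1) :
    entropy ρ - entropy (ptraceSnd ρ) ≤
      (∑ α, entropy (ptraceFst ((P α ⊗ₖ (1 : Matrix k k ℂ)) * ρ)))
        - (∑ α, Real.negMulLog (((P α * ptraceSnd ρ).trace).re)) := by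
  obtain ⟨U, l, hU, hl, hent⟩ := aux_entropy hρ
  have h1 := aux_ptSnd_psd hρ
  obtain ⟨V, m, hV, hm, hent1⟩ := aux_entropy h1
  have hR := fun α => aux_pt_psd (k := k) (hP α) hρ
  choose U' l' hU' hl' hent' using fun α => aux_entropy (hR α)
  have hp : ∀ α, 0 ≤ (P α * ptraceSnd ρ).trace := fun α => aux_tn (hP α) h1
  have hσ : (ptraceSnd ρ ⊗ₖ (1 : Matrix k k ℂ)).PosSemidef := h1.kronecker PosSemidef.one
  have hVk : DiagForm (V ⊗ₖ (1 : Matrix k k ℂ)) (fun p => m p.1) (ptraceSnd ρ ⊗ₖ 1) := by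
    refine ⟨?_, ?_, ?_⟩
    · rw [conjTranspose_kronecker, ← mul_kronecker_mul, hV.1]; simp
    · rw [conjTranspose_kronecker, ← mul_kronecker_mul, hV.2.1]; simp
    · have : (diagonal fun p : n × k => ((m p.1 : ℝ) : ℂ)) =
          diagonal (fun i => (m i : ℂ)) ⊗ₖ (1 : Matrix k k ℂ) := by
        rw [← diagonal_one, diagonal_kronecker_diagonal]; simp
      rw [this, conjTranspose_kronecker, ← mul_kronecker_mul, ← mul_kronecker_mul, ← hV.2.2]; simp
  have hsum : ∀ i, ∑ b, ((((V ⊗ₖ (1 : Matrix k k ℂ))ᴴ * ρ * (V ⊗ₖ (1 : Matrix k k ℂ))))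
      (i, b) (i, b)).re = m i := by
    intro i
    have e := congrFun (congrFun (aux_snd (k := k) Vᴴ V ρ) i) i
    have e2 : Vᴴ * ptraceSnd ρ * V = diagonal (fun i => (m i : ℂ)) := by
      conv_lhs => rw [hV.2.2]
      calc _ = (Vᴴ * V) * diagonal (fun i => (m i : ℂ)) * (Vᴴ * V) := by
            simp only [Matrix.mul_assoc]
        _ = _ := by rw [hV.2.1]; simp
    rw [e2, diagonal_apply_eq] at e
    have e3 := congrArg Complex.re e
    rw [← Complex.re_sum, conjTranspose_kronecker, conjTranspose_one]
    exact e3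
  have hnn : ∀ p, 0 ≤ ((((V ⊗ₖ (1 : Matrix k k ℂ))ᴴ * ρ * (V ⊗ₖ (1 : Matrix k k ℂ)))) p p).re :=
    fun p => aux_nonneg (hρ.conjTranspose_mul_mul_same _).diag_nonneg
  have htrR : ∀ α, ∑ b, ((ptraceFst ((P α ⊗ₖ (1 : Matrix k k ℂ)) * ρ)) b b).re =
      (P α * ptraceSnd ρ).trace.re := by
    intro α
    rw [aux_trSnd, ← Complex.re_sum]; rfl
  have key := aux_dpi hU hVk hl (fun p => hm _)
    (by
      rintro ⟨i, b⟩ h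
      have := hsum i
      rw [show m i = 0 from h, Finset.sum_eq_zero_iff_of_nonneg (fun b _ => hnn (i, b))] at this
      exact this b (Finset.mem_univ _))
    hU' (fun α => aux_diag_one (k := k) _ (hp α)) hl' (fun α _ => aux_nonneg (hp α))
    (by
      intro α b h
      have := htrR α
      rw [h, Finset.sum_eq_zero_iff_of_nonneg
        (fun b _ => aux_nonneg (hR α).diag_nonneg)] at this
      simpa using this b (Finset.mem_univ _))
    (by
      rw [← trace_sum, aux_ptsum P hPsum]
      simp only [Matrix.trace, Matrix.diag, ptraceFst, Matrix.of_apply, Fintype.sum_prod_type]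
      rw [Finset.sum_comm])
    (by
      intro Y
      have hE : ∀ α, (P α ⊗ₖ (1 : Matrix k k ℂ)).PosSemidef :=
        fun α => (hP α).kronecker PosSemidef.one
      have hm1 : ∀ α (X : Matrix k k ℂ),
          (P α ⊗ₖ (1 : Matrix k k ℂ)) * ((1 : Matrix n n ℂ) ⊗ₖ X) = P α ⊗ₖ X := by
        intro α X; rw [← mul_kronecker_mul]; simp
      have hm2 : ∀ α (X : Matrix k k ℂ),
          ((1 : Matrix n n ℂ) ⊗ₖ X) * (P α ⊗ₖ (1 : Matrix k k ℂ)) = P α ⊗ₖ X := by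
        intro α X; rw [← mul_kronecker_mul]; simp
      have hc : ∀ α, (P α ⊗ₖ (1 : Matrix k k ℂ)) * ((1 : Matrix n n ℂ) ⊗ₖ Y α) =
          ((1 : Matrix n n ℂ) ⊗ₖ Y α) * (P α ⊗ₖ (1 : Matrix k k ℂ)) := by
        intro α; rw [hm1, hm2]
      have hks := aux_kron_sum (k := k) P hPsum
      refine ⟨_, ?_, (aux_schwarz hE hks hc hσ).trans (le_of_eq ?_),
        (aux_schwarz' hE hks hc hρ).trans (le_of_eq ?_)⟩
      · rw [Finset.sum_mul, trace_sum, Complex.re_sum]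
        refine Finset.sum_congr rfl fun α _ => ?_
        rw [hm1, aux_pt]
      · refine Finset.sum_congr rfl fun α _ => ?_
        rw [conjTranspose_kronecker, ← mul_kronecker_mul, conjTranspose_one, Matrix.one_mul, hm1,
          ← aux_pt, ← mul_kronecker_mul, Matrix.one_mul, aux_fst_kron]
      · refine Finset.sum_congr rfl fun α _ => ?_
        rw [conjTranspose_kronecker, ← mul_kronecker_mul, conjTranspose_one, Matrix.one_mul, hm1,
          ← aux_pt])
  have c1 : ∑ p : n × k, ((((V ⊗ₖ (1 : Matrix k k ℂ))ᴴ * ρ * (V ⊗ₖ (1 : Matrix k k ℂ)))) p p).re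
      * Real.log (m p.1) = - entropy (ptraceSnd ρ) := by
    rw [Fintype.sum_prod_type]
    simp only [← Finset.sum_mul, hsum, hent1, Real.negMulLog, neg_mul, Finset.sum_neg_distrib,
      neg_neg]
  rw [c1] at key
  simp only [conjTranspose_one, Matrix.one_mul, Matrix.mul_one, ← Finset.sum_mul, htrR, ← hent,
    ← hent'] at key
  simp only [Real.negMulLog, neg_mul, Finset.sum_neg_distrib]
  linarith

lemma aux_part2 {ι κ : Type*} [Fintype ι] [Fintype κ] {R : ι → Matrix n n ℂ}
    (hR : ∀ α, (R α).PosSemidef)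
    {Q : κ → Matrix n n ℂ} (hQ : ∀ α, (Q α).PosSemidef) (hQsum : ∑ α, Q α = 1) :
    (∑ α, entropy (R α)) - entropy (∑ α, R α) ≤
      (∑ α, ∑ β, Real.negMulLog ((Q β * R α).trace.re))
        - (∑ β, Real.negMulLog ((Q β * ∑ α, R α).trace.re)) := by
  have hS : (∑ α, R α).PosSemidef := posSemidef_sum _ fun α _ => hR α
  obtain ⟨V, m, hV, hm, hent1⟩ := aux_entropy hS
  choose U l hU hl hent using fun α => aux_entropy (hR α)
  have hq : ∀ β, 0 ≤ (Q β * ∑ α, R α).trace := fun β => aux_tn (hQ β) hS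
  have hp : ∀ α β, 0 ≤ (Q β * R α).trace := fun α β => aux_tn (hQ β) (hR α)
  have hqs : ∀ β, ∑ α, (Q β * R α).trace.re = (Q β * ∑ α, R α).trace.re := by
    intro β; rw [Finset.mul_sum, trace_sum, Complex.re_sum]
  have hsum : ∀ j, ∑ α, ((Vᴴ * R α * V) j j).re = m j := by
    intro j
    have e2 : Vᴴ * (∑ α, R α) * V = diagonal (fun i => (m i : ℂ)) := by
      conv_lhs => rw [hV.2.2]
      calc _ = (Vᴴ * V) * diagonal (fun i => (m i : ℂ)) * (Vᴴ * V) := by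
            simp only [Matrix.mul_assoc]
        _ = _ := by rw [hV.2.1]; simp
    have e := congrArg Complex.re (congrFun (congrFun e2 j) j)
    rw [diagonal_apply_eq, Finset.mul_sum, Finset.sum_mul, Matrix.sum_apply, Complex.re_sum] at e
    exact e
  have hnn : ∀ α j, 0 ≤ ((Vᴴ * R α * V) j j).re :=
    fun α j => aux_nonneg ((hR α).conjTranspose_mul_mul_same _).diag_nonneg
  have key := fun α => aux_dpi (k := Unit) (hU α) hV (hl α) hm
    (by
      intro j h
      have := hsum j
      rw [h, Finset.sum_eq_zero_iff_of_nonneg (fun α _ => hnn α j)] at this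
      exact this α (Finset.mem_univ _))
    (fun β => aux_diag_one (k := Unit) _ (hp α β)) (fun β => aux_diag_one (k := Unit) _ (hq β))
    (fun β _ => aux_nonneg (hp α β)) (fun β _ => aux_nonneg (hq β))
    (by
      intro β b h
      have := hqs β
      rw [h, Finset.sum_eq_zero_iff_of_nonneg (fun α _ => aux_nonneg (hp α β))] at this
      simpa using this α (Finset.mem_univ _))
    (by
      simp only [trace_smul, trace_one, Fintype.card_unit, Nat.cast_one, smul_eq_mul, mul_one]
      rw [← trace_sum, ← Finset.sum_mul, hQsum, Matrix.one_mul])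
    (by
      intro Y
      have ut : ∀ A : Matrix Unit Unit ℂ, A.trace = A () () := by
        intro A; simp [Matrix.trace]
      have um : ∀ A B : Matrix Unit Unit ℂ, (A * B) () () = A () () * B () () := by
        intro A B; simp [Matrix.mul_apply]
      have hc : ∀ β, Q β * (Y β () () • (1 : Matrix n n ℂ)) = (Y β () () • (1 : Matrix n n ℂ)) * Q β := by
        intro β; simp
      refine ⟨_, ?_, (aux_schwarz hQ hQsum hc hS).trans (le_of_eq ?_),
        (aux_schwarz' hQ hQsum hc (hR α)).trans (le_of_eq ?_)⟩
      · rw [Finset.sum_mul, trace_sum, Complex.re_sum]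
        refine Finset.sum_congr rfl fun β _ => ?_
        simp [ut]; ring
      · refine Finset.sum_congr rfl fun β _ => ?_
        simp [ut, um]; ring
      · refine Finset.sum_congr rfl fun β _ => ?_
        simp [ut, um]; ring)
  have key2 := Finset.sum_le_sum fun α (_ : α ∈ Finset.univ) => key α
  simp only [Finset.sum_sub_distrib, ← hent] at key2
  have c1 : ∑ α, ∑ j, ((Vᴴ * R α * V) j j).re * Real.log (m j) = - entropy (∑ α, R α) := by
    rw [Finset.sum_comm]
    simp only [← Finset.sum_mul, hsum, hent1, Real.negMulLog, neg_mul, Finset.sum_neg_distrib,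
      neg_neg]
  have c2 : ∑ α, ∑ β, (Q β * R α).trace.re * Real.log ((Q β * ∑ α, R α).trace.re)
      = - ∑ β, Real.negMulLog ((Q β * ∑ α, R α).trace.re) := by
    rw [Finset.sum_comm]
    simp only [← Finset.sum_mul, hqs, Real.negMulLog, neg_mul, Finset.sum_neg_distrib,
      neg_neg]
  rw [c1] at key2
  simp only [conjTranspose_one, Matrix.one_mul, Matrix.mul_one, Finset.univ_unique,
    Finset.sum_singleton, Matrix.smul_apply, Matrix.one_apply_eq, smul_eq_mul, mul_one, c2] at key2
  linarith

end Aux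

/-- **Interpolating classical-quantum entropy chain**:
`S[ρ₁₂] − S[ρ₁] − S[ρ₂] ≤ S^{cl,Q}[ρ₁₂] − S^cl[ρ₁] − S[ρ₂]
  ≤ S^cl[ρ₁₂] − S^cl[ρ₁] − S^cl[ρ₂]`. -/
theorem classical_quantum_entropy_chain
    {n₁ n₂ : Type*} [Fintype n₁] [Fintype n₂]
    [DecidableEq n₁] [DecidableEq n₂] {M N : ℕ}
    (ρ : Matrix (n₁ × n₂) (n₁ × n₂) ℂ)
    (hρ : ρ.PosSemidef) (hρtr : ρ.trace = 1)
    (P : Fin M → Matrix n₁ n₁ ℂ) (hP : ∀ α, (P α).PosSemidef)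
    (hPsum : ∑ α, P α = 1)
    (Q : Fin N → Matrix n₂ n₂ ℂ) (hQ : ∀ β, (Q β).PosSemidef)
    (hQsum : ∑ β, Q β = 1) :
    entropy ρ - entropy (ptraceSnd ρ) - entropy (ptraceFst ρ) ≤
      (∑ α, entropy (ptraceFst ((P α ⊗ₖ (1 : Matrix n₂ n₂ ℂ)) * ρ)))
        - (∑ α, Real.negMulLog (((P α * ptraceSnd ρ).trace).re))
        - entropy (ptraceFst ρ)
    ∧ (∑ α, entropy (ptraceFst ((P α ⊗ₖ (1 : Matrix n₂ n₂ ℂ)) * ρ)))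
        - (∑ α, Real.negMulLog (((P α * ptraceSnd ρ).trace).re))
        - entropy (ptraceFst ρ) ≤
      (∑ α, ∑ β, Real.negMulLog ((((P α ⊗ₖ Q β) * ρ).trace).re))
        - (∑ α, Real.negMulLog (((P α * ptraceSnd ρ).trace).re))
        - (∑ β, Real.negMulLog (((Q β * ptraceFst ρ).trace).re)) := by
  have h1 := aux_part1 hρ hP hPsum
  have h2 := aux_part2 (fun α => aux_pt_psd (k := n₂) (hP α) hρ) hQ hQsum
  simp only [aux_ptsum P hPsum, aux_pt] at h2
  constructor <;> linarith
end

section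
/- Partially classical form of stronger subadditivity: Let ρ₁₂₃ be a density matrix on H₁⊗H₂⊗H₃ and let P^1,…,P^M be positive semidefinite operators on H₁ with ∑_α P^α = id_{H₁}. Define S^{cl,Q,Q}[ρ₁₂₃] = ∑_α S[ Tr₁[(P^α⊗id₂₃) ρ₁₂₃] ] and S^{cl,Q}[ρ₁₂] = ∑_α S[ Tr₁[(P^α⊗id₂) ρ₁₂] ], where ρ₁₂ = Tr₃ ρ₁₂₃. Then S[ρ₁₂₃] − S[ρ₁₂] ≤ S^{cl,Q,Q}[ρ₁₂₃] − S^{cl,Q}[ρ₁₂]. -/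
set_option linter.unusedSectionVars false
open Matrix Kronecker Real
open scoped ComplexOrder

/-- `A = U diag(a) U*` with `U` unitary. -/
def IsDg {n : Type*} [Fintype n] [DecidableEq n]
    (A U : Matrix n n ℂ) (a : n → ℝ) : Prop :=
  Uᴴ * U = 1 ∧ U * Uᴴ = 1 ∧ A = U * diagonal (fun i => (a i : ℂ)) * Uᴴ

section dg
variable {n : Type*} [Fintype n] [DecidableEq n]

theorem IsDg.of_herm {A : Matrix n n ℂ} (h : A.IsHermitian) :
    ∃ U, IsDg A U h.eigenvalues := by
  refine ⟨(h.eigenvectorUnitary : Matrix n n ℂ), ?_, ?_, ?_⟩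
  · exact Unitary.coe_star_mul_self h.eigenvectorUnitary
  · exact Unitary.coe_mul_star_self h.eigenvectorUnitary
  · have := h.spectral_theorem
    simpa [Unitary.conjStarAlgAut_apply, Function.comp_def, star_eq_conjTranspose] using this

theorem IsDg.shift {A U : Matrix n n ℂ} {a : n → ℝ} (h : IsDg A U a) (c : ℝ) :
    IsDg (A + (c : ℂ) • 1) U (fun i => a i + c) := by
  obtain ⟨h1, h2, h3⟩ := h
  refine ⟨h1, h2, ?_⟩
  have : diagonal (fun i => ((a i + c : ℝ) : ℂ)) =
      diagonal (fun i => (a i : ℂ)) + (c : ℂ) • (1 : Matrix n n ℂ) := by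
    ext i j
    by_cases hij : i = j <;> simp [hij, diagonal]
  rw [this, mul_add, add_mul, ← h3]
  simp [h2]

/-- quadratic functional -/
theorem IsDg.quad {A B U V : Matrix n n ℂ} {a b : n → ℝ} (hA : IsDg A U a) (hB : IsDg B V b)
    (z : Matrix n n ℂ) (t : ℝ) :
    2 * (trace (A * (V * z * Uᴴ)ᴴ)).re - (trace (B * ((V * z * Uᴴ) * (V * z * Uᴴ)ᴴ))).re
      - t * (trace (A * ((V * z * Uᴴ)ᴴ * (V * z * Uᴴ)))).re
    = ∑ i, ∑ j, (2 * (a i * ((star (z j i)) * (Vᴴ * U) j i).re) -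
        (b j + t * a i) * Complex.normSq (z j i)) := by
  obtain ⟨u1, u2, hA⟩ := hA
  obtain ⟨v1, v2, hB⟩ := hB
  have e1 : trace (A * (V * z * Uᴴ)ᴴ) =
      ∑ i, ∑ j, (a i : ℂ) * (star (z j i) * (Vᴴ * U) j i) := by
    have : A * (V * z * Uᴴ)ᴴ = U * (diagonal (fun i => (a i : ℂ)) * (zᴴ * Vᴴ)) := by
      rw [hA]; simp only [conjTranspose_mul, conjTranspose_conjTranspose, Matrix.mul_assoc]
      rw [← Matrix.mul_assoc Uᴴ U, u1, Matrix.one_mul]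
    rw [this, trace_mul_comm, Matrix.mul_assoc, Matrix.mul_assoc, trace]
    refine Finset.sum_congr rfl fun i _ => ?_
    rw [diag_apply, diagonal_mul, Matrix.mul_apply, Finset.mul_sum]
    simp [conjTranspose_apply]
  have e2 : trace (B * ((V * z * Uᴴ) * (V * z * Uᴴ)ᴴ)) =
      ∑ i, ∑ j, (b j : ℂ) * (z j i * star (z j i)) := by
    have : B * ((V * z * Uᴴ) * (V * z * Uᴴ)ᴴ) =
        V * (diagonal (fun i => (b i : ℂ)) * (z * zᴴ) * Vᴴ) := by
      rw [hB]; simp only [conjTranspose_mul, conjTranspose_conjTranspose, Matrix.mul_assoc]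
      rw [← Matrix.mul_assoc Uᴴ U, u1, Matrix.one_mul, ← Matrix.mul_assoc Vᴴ V, v1, Matrix.one_mul]
    rw [this, trace_mul_comm, Matrix.mul_assoc, v1, Matrix.mul_one, trace, Finset.sum_comm]
    refine Finset.sum_congr rfl fun i _ => ?_
    rw [diag_apply, diagonal_mul, Matrix.mul_apply, Finset.mul_sum]
    simp [conjTranspose_apply]
  have e3 : trace (A * ((V * z * Uᴴ)ᴴ * (V * z * Uᴴ))) =
      ∑ i, ∑ j, (a i : ℂ) * (star (z j i) * (z j i)) := by
    have : A * ((V * z * Uᴴ)ᴴ * (V * z * Uᴴ)) =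
        U * (diagonal (fun i => (a i : ℂ)) * (zᴴ * z) * Uᴴ) := by
      rw [hA]; simp only [conjTranspose_mul, conjTranspose_conjTranspose, Matrix.mul_assoc]
      rw [← Matrix.mul_assoc Uᴴ U, u1, Matrix.one_mul, ← Matrix.mul_assoc Vᴴ V, v1, Matrix.one_mul]
    rw [this, trace_mul_comm, Matrix.mul_assoc, u1, Matrix.mul_one, trace]
    refine Finset.sum_congr rfl fun i _ => ?_
    rw [diag_apply, diagonal_mul, Matrix.mul_apply, Finset.mul_sum]
    simp [conjTranspose_apply]
  rw [e1, e2, e3]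
  simp only [Complex.re_sum, Finset.mul_sum, ← Finset.sum_sub_distrib]
  refine Finset.sum_congr rfl fun i _ => Finset.sum_congr rfl fun j _ => ?_
  rw [Complex.re_ofReal_mul, Complex.re_ofReal_mul, Complex.re_ofReal_mul, Complex.star_def,
    Complex.mul_conj, mul_comm _ (z j i), Complex.mul_conj, Complex.ofReal_re]
  ring

/-- weights -/
noncomputable def wt (U V : Matrix n n ℂ) (i j : n) : ℝ := Complex.normSq ((Vᴴ * U) j i)

theorem quad_le (z w : ℂ) (a q : ℝ) (hq : 0 < q) :
    2 * (a * ((star z) * w).re) - q * Complex.normSq z ≤ Complex.normSq w * (a * (a / q)) := by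
  have h : 0 ≤ Complex.normSq ((q : ℂ) * z - a * w) / q := by
    have := Complex.normSq_nonneg ((q : ℂ) * z - a * w); positivity
  have e : Complex.normSq ((q : ℂ) * z - a * w) / q = Complex.normSq w * (a * (a / q)) -
      (2 * (a * ((star z) * w).re) - q * Complex.normSq z) := by
    simp [Complex.normSq_apply]
    field_simp
    ring
  linarith

theorem quad_eq (w : ℂ) (a q : ℝ) (hq : 0 < q) :
    2 * (a * ((star ((a / q : ℝ) * w)) * w).re) - q * Complex.normSq ((a / q : ℝ) * w)
      = Complex.normSq w * (a * (a / q)) := by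
  simp [Complex.normSq_apply]
  field_simp
  ring

theorem IsDg.quad_le {A B U V : Matrix n n ℂ} {a b : n → ℝ} (hA : IsDg A U a) (hB : IsDg B V b)
    (ha : ∀ i, 0 < a i) (hb : ∀ i, 0 < b i) (t : ℝ) (ht : 0 ≤ t) (Z : Matrix n n ℂ) :
    2 * (trace (A * Zᴴ)).re - (trace (B * (Z * Zᴴ))).re - t * (trace (A * (Zᴴ * Z))).re
      ≤ ∑ i, ∑ j, wt U V i j * (a i * (a i / (b j + t * a i))) := by
  have hZ : Z = V * (Vᴴ * Z * U) * Uᴴ := by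
    simp only [Matrix.mul_assoc]
    rw [hA.2.1, Matrix.mul_one, ← Matrix.mul_assoc, hB.2.1, Matrix.one_mul]
  rw [hZ, hA.quad hB]
  refine Finset.sum_le_sum fun i _ => Finset.sum_le_sum fun j _ => _root_.quad_le _ _ _ _ ?_
  have := ha i; have := hb j; positivity

theorem IsDg.quad_eq {A B U V : Matrix n n ℂ} {a b : n → ℝ} (hA : IsDg A U a) (hB : IsDg B V b)
    (ha : ∀ i, 0 < a i) (hb : ∀ i, 0 < b i) (t : ℝ) (ht : 0 ≤ t) : ∃ Z : Matrix n n ℂ,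
    2 * (trace (A * Zᴴ)).re - (trace (B * (Z * Zᴴ))).re - t * (trace (A * (Zᴴ * Z))).re
      = ∑ i, ∑ j, wt U V i j * (a i * (a i / (b j + t * a i))) := by
  refine ⟨V * (Matrix.of fun j i => ((a i / (b j + t * a i) : ℝ) : ℂ) * (Vᴴ * U) j i) * Uᴴ, ?_⟩
  rw [hA.quad hB]
  refine Finset.sum_congr rfl fun i _ => Finset.sum_congr rfl fun j _ =>
    _root_.quad_eq _ _ _ ?_
  have := ha i; have := hb j; positivity

theorem IsDg.sum_wt {A U V : Matrix n n ℂ} {a : n → ℝ} (hA : IsDg A U a) (g : n → ℝ) :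
    ∑ i, ∑ j, wt U V i j * (a i * g j) =
      (trace (A * (V * diagonal (fun i => (g i : ℂ)) * Vᴴ))).re := by
  have : trace (A * (V * diagonal (fun i => (g i : ℂ)) * Vᴴ)) =
      ∑ i, ∑ j, (((wt U V i j * (a i * g j) : ℝ)) : ℂ) := by
    have e : trace (A * (V * diagonal (fun i => (g i : ℂ)) * Vᴴ)) =
      trace (diagonal (fun i => (a i : ℂ)) * ((Vᴴ * U)ᴴ *
        (diagonal (fun i => (g i : ℂ)) * (Vᴴ * U)))) := by
      rw [hA.2.2, Matrix.mul_assoc, Matrix.mul_assoc U, trace_mul_comm]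
      simp only [conjTranspose_mul, conjTranspose_conjTranspose, Matrix.mul_assoc]
    rw [e, trace]
    refine Finset.sum_congr rfl fun i _ => ?_
    rw [diag_apply, diagonal_mul, Matrix.mul_apply, Finset.mul_sum]
    refine Finset.sum_congr rfl fun j _ => ?_
    rw [diagonal_mul, conjTranspose_apply, wt]
    push_cast
    rw [← Complex.mul_conj, Complex.star_def]
    ring
  rw [this]; simp [Complex.re_sum]

theorem wt_sum {U V : Matrix n n ℂ} (hU : Uᴴ * U = 1) (hV : V * Vᴴ = 1) (i : n) :
    ∑ j, wt U V i j = 1 := by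
  have h : ((Vᴴ * U)ᴴ * (Vᴴ * U)) i i = 1 := by
    rw [conjTranspose_mul, conjTranspose_conjTranspose, Matrix.mul_assoc, ← Matrix.mul_assoc V, hV,
      Matrix.one_mul, hU, one_apply_eq]
  rw [Matrix.mul_apply] at h
  have h2 : ((∑ j, wt U V i j : ℝ) : ℂ) = 1 := by
    rw [← h]; push_cast
    refine Finset.sum_congr rfl fun j _ => ?_
    rw [conjTranspose_apply, wt, ← Complex.mul_conj, Complex.star_def, mul_comm]
  exact_mod_cast h2

theorem IsDg.trace_re {A U : Matrix n n ℂ} {a : n → ℝ} (hA : IsDg A U a) :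
    (trace A).re = ∑ i, a i := by
  rw [hA.2.2, trace_mul_comm, ← Matrix.mul_assoc, hA.1, Matrix.one_mul, trace_diagonal]
  simp [Complex.re_sum]

end dg

theorem psd_factor {n : Type*} [Fintype n] {C : Matrix n n ℂ}
    (hC : C.PosSemidef) : ∃ D : Matrix n n ℂ, C = Dᴴ * D := by
  classical
  obtain ⟨U, h1, h2, h3⟩ := IsDg.of_herm hC.1
  refine ⟨diagonal (fun i => ((√(hC.1.eigenvalues i) : ℝ) : ℂ)) * Uᴴ, ?_⟩
  rw [conjTranspose_mul, conjTranspose_conjTranspose, diagonal_conjTranspose, Matrix.mul_assoc,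
    ← Matrix.mul_assoc (diagonal _) (diagonal _), diagonal_mul_diagonal, ← Matrix.mul_assoc]
  refine h3.trans ?_
  congr 3
  ext i
  simp only [Pi.star_apply, Complex.star_def, Complex.conj_ofReal]
  rw [← Complex.ofReal_mul, Real.mul_self_sqrt (hC.eigenvalues_nonneg i)]

theorem trace_mul_nonneg' {n : Type*} [Fintype n] {A C : Matrix n n ℂ}
    (hA : A.PosSemidef) (hC : C.PosSemidef) : 0 ≤ (trace (A * C)).re := by
  classical
  obtain ⟨D, rfl⟩ := psd_factor hC
  rw [← Matrix.mul_assoc, trace_mul_comm, ← Matrix.mul_assoc]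
  have := (hA.mul_mul_conjTranspose_same D).trace_nonneg
  exact (Complex.nonneg_iff.mp this).1

/-- Schwarz inequality -/
theorem schwarz {N m ι : Type*} [Fintype N] [DecidableEq N] [Fintype m] [Fintype ι]
    (A : Matrix N N ℂ) (hA : A.PosSemidef)
    (A' : ι → Matrix m m ℂ)
    (P : ι → Matrix N N ℂ) (hP : ∀ α, (P α).PosSemidef) (hPs : ∑ α, P α = 1)
    (E : Matrix m m ℂ → Matrix N N ℂ)
    (hEm : ∀ X Y, E (X * Y) = E X * E Y) (hEs : ∀ X, E Xᴴ = (E X)ᴴ)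
    (hc : ∀ α Y, P α * E Y = E Y * P α)
    (hA' : ∀ α Y, trace (A' α * Y) = trace (A * (P α * E Y)))
    (Y : ι → Matrix m m ℂ) :
    (trace (A * ((∑ α, P α * E (Y α))ᴴ * (∑ α, P α * E (Y α))))).re ≤
      ∑ α, (trace (A' α * ((Y α)ᴴ * Y α))).re := by
  set Z := ∑ α, P α * E (Y α) with hZ
  have hZs : Zᴴ = ∑ α, (E (Y α))ᴴ * P α := by
    rw [hZ, conjTranspose_sum]
    exact Finset.sum_congr rfl fun α _ => by rw [conjTranspose_mul, (hP α).1.eq]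
  have key : ∑ α, (E (Y α) - Z)ᴴ * P α * (E (Y α) - Z) =
      (∑ α, P α * E ((Y α)ᴴ * Y α)) - Zᴴ * Z := by
    have : ∀ α, (E (Y α) - Z)ᴴ * P α * (E (Y α) - Z) =
        P α * E ((Y α)ᴴ * Y α) - ((E (Y α))ᴴ * P α) * Z - Zᴴ * (P α * E (Y α)) +
          Zᴴ * P α * Z := by
      intro α
      rw [hEm, hEs, ← mul_assoc, ← hEs, hc, hEs, conjTranspose_sub]
      noncomm_ring
    simp only [this, Finset.sum_add_distrib, Finset.sum_sub_distrib]
    rw [← Finset.sum_mul, ← Finset.mul_sum, ← Finset.sum_mul, ← Finset.mul_sum, hPs, ← hZs, ← hZ]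
    noncomm_ring
  have h0 : 0 ≤ (trace (A * ∑ α, (E (Y α) - Z)ᴴ * P α * (E (Y α) - Z))).re := by
    apply trace_mul_nonneg' hA
    exact posSemidef_sum _ fun α _ => (hP α).conjTranspose_mul_mul_same _
  rw [key, mul_sub, trace_sub, Finset.mul_sum, trace_sum] at h0
  simp only [← hA'] at h0
  rw [Complex.sub_re, Complex.re_sum] at h0
  linarith

section calcs
variable {n : Type*} [Fintype n] [DecidableEq n]

/-- the interpolating function -/
noncomputable def Fn (U V : Matrix n n ℂ) (a b : n → ℝ) (t : ℝ) : ℝ :=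
  ∑ i, ∑ j, wt U V i j * (a i * Real.log (b j + t * a i))

/-- the interpolating function near infinity -/
noncomputable def Gn (U V : Matrix n n ℂ) (a b : n → ℝ) (s : ℝ) : ℝ :=
  ∑ i, ∑ j, wt U V i j * (a i * Real.log (s * b j + a i))

theorem Fn_deriv (U V : Matrix n n ℂ) (a b : n → ℝ)
    (ha : ∀ i, 0 < a i) (hb : ∀ i, 0 < b i) (t : ℝ) (ht : 0 ≤ t) :
    HasDerivAt (Fn U V a b) (∑ i, ∑ j, wt U V i j * (a i * (a i / (b j + t * a i)))) t := by
  unfold Fn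
  refine HasDerivAt.fun_sum fun i _ => HasDerivAt.fun_sum fun j _ => ?_
  refine HasDerivAt.const_mul _ (HasDerivAt.const_mul _ ?_)
  refine HasDerivAt.log ?_ ?_
  · simpa using ((hasDerivAt_id t).mul_const (a i)).const_add (b j)
  · have := ha i; have := hb j; positivity

theorem Gn_cont (U V : Matrix n n ℂ) (a b : n → ℝ)
    (ha : ∀ i, 0 < a i) : ContinuousAt (Gn U V a b) 0 := by
  unfold Gn
  refine tendsto_finsetSum _ fun i _ => tendsto_finsetSum _ fun j _ => ?_
  have : ContinuousAt (fun s => wt U V i j * (a i * Real.log (s * b j + a i))) 0 := by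
    refine ContinuousAt.mul continuousAt_const (ContinuousAt.mul continuousAt_const ?_)
    refine ContinuousAt.log (by fun_prop) ?_
    have := ha i; simp; positivity
  exact this

theorem Gn_zero {U V : Matrix n n ℂ} (a b : n → ℝ) (hU : Uᴴ * U = 1) (hV : V * Vᴴ = 1) :
    Gn U V a b 0 = ∑ i, a i * Real.log (a i) := by
  unfold Gn
  refine Finset.sum_congr rfl fun i _ => ?_
  simp only [zero_mul, zero_add]
  rw [← Finset.sum_mul, wt_sum hU hV, one_mul]

theorem Fn_eq_Gn {U V : Matrix n n ℂ} (a b : n → ℝ) (hU : Uᴴ * U = 1) (hV : V * Vᴴ = 1)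
    (ha : ∀ i, 0 < a i) (hb : ∀ i, 0 < b i) (s : ℝ) (hs : 0 < s) :
    Fn U V a b s⁻¹ = Gn U V a b s - (∑ i, a i) * Real.log s := by
  have h1 : (∑ i, a i) * Real.log s = ∑ i, ∑ j, wt U V i j * (a i * Real.log s) := by
    rw [Finset.sum_mul]
    refine Finset.sum_congr rfl fun i _ => ?_
    rw [← Finset.sum_mul, wt_sum hU hV, one_mul]
  unfold Fn Gn
  rw [h1]
  simp only [← Finset.sum_sub_distrib]
  refine Finset.sum_congr rfl fun i _ => Finset.sum_congr rfl fun j _ => ?_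
  have := ha i; have := hb j
  have e : b j + s⁻¹ * a i = (s * b j + a i) / s := by field_simp
  rw [e, Real.log_div (by positivity) (by positivity)]
  ring

end calcs

theorem dpi {N m ι : Type*} [Fintype N] [DecidableEq N] [Fintype m] [DecidableEq m] [Fintype ι]
    {A B U V : Matrix N N ℂ} {a b : N → ℝ}
    (hA : A.PosSemidef) (hB : B.PosSemidef)
    (dA : IsDg A U a) (dB : IsDg B V b) (ha : ∀ i, 0 < a i) (hb : ∀ i, 0 < b i)
    {A' B' U' V' : ι → Matrix m m ℂ} {a' b' : ι → m → ℝ}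
    (dA' : ∀ α, IsDg (A' α) (U' α) (a' α)) (dB' : ∀ α, IsDg (B' α) (V' α) (b' α))
    (ha' : ∀ α i, 0 < a' α i) (hb' : ∀ α i, 0 < b' α i)
    (P : ι → Matrix N N ℂ) (hP : ∀ α, (P α).PosSemidef) (hPs : ∑ α, P α = 1)
    (E : Matrix m m ℂ → Matrix N N ℂ) (hE1 : E 1 = 1)
    (hEm : ∀ X Y, E (X * Y) = E X * E Y) (hEs : ∀ X, E Xᴴ = (E X)ᴴ)
    (hc : ∀ α Y, P α * E Y = E Y * P α)
    (hA' : ∀ α Y, trace (A' α * Y) = trace (A * (P α * E Y)))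
    (hB' : ∀ α Y, trace (B' α * Y) = trace (B * (P α * E Y))) :
    Fn U V a b 0 - ∑ α, Fn (U' α) (V' α) (a' α) (b' α) 0 ≤
      ∑ i, a i * Real.log (a i) - ∑ α, ∑ i, a' α i * Real.log (a' α i) := by
  set G : ℝ → ℝ := fun t => Fn U V a b t - ∑ α, Fn (U' α) (V' α) (a' α) (b' α) t with hG
  have hder : ∀ t, 0 ≤ t → HasDerivAt G
      ((∑ i, ∑ j, wt U V i j * (a i * (a i / (b j + t * a i)))) -
      ∑ α, ∑ i, ∑ j, wt (U' α) (V' α) i j *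
        (a' α i * (a' α i / (b' α j + t * a' α i)))) t := by
    intro t ht
    refine (Fn_deriv U V a b ha hb t ht).sub (HasDerivAt.fun_sum fun α _ => ?_)
    exact Fn_deriv _ _ _ _ (ha' α) (hb' α) t ht
  have hnn : ∀ t, 0 ≤ t → 0 ≤ ((∑ i, ∑ j, wt U V i j * (a i * (a i / (b j + t * a i)))) -
      ∑ α, ∑ i, ∑ j, wt (U' α) (V' α) i j *
        (a' α i * (a' α i / (b' α j + t * a' α i)))) := by
    intro t ht
    choose Y hY using fun α => (dA' α).quad_eq (dB' α) (ha' α) (hb' α) t ht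
    have h1 := dA.quad_le dB ha hb t ht (∑ α, P α * E (Y α))
    have hZs : (∑ α, P α * E (Y α))ᴴ = ∑ α, P α * E ((Y α)ᴴ) := by
      rw [conjTranspose_sum]
      refine Finset.sum_congr rfl fun α _ => ?_
      rw [conjTranspose_mul, (hP α).1.eq, ← hEs, hc]
    have h2 := schwarz A hA A' P hP hPs E hEm hEs hc hA' Y
    have h3 := schwarz B hB B' P hP hPs E hEm hEs hc hB' (fun α => (Y α)ᴴ)
    rw [← hZs] at h3
    simp only [conjTranspose_conjTranspose] at h3
    have h4 : (trace (A * (∑ α, P α * E (Y α))ᴴ)).re = ∑ α, (trace (A' α * (Y α)ᴴ)).re := by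
      rw [hZs, Finset.mul_sum, trace_sum, Complex.re_sum]
      simp only [hA']
    rw [h4] at h1
    simp only [← hY, Finset.sum_sub_distrib, ← Finset.mul_sum]
    have := mul_le_mul_of_nonneg_left h2 ht
    linarith
  have hmono : MonotoneOn G (Set.Ici 0) := by
    apply monotoneOn_of_deriv_nonneg (convex_Ici 0)
    · exact fun t ht => (hder t ht).continuousAt.continuousWithinAt
    · intro t ht
      exact (hder t (interior_subset ht)).differentiableAt.differentiableWithinAt
    · intro t ht
      rw [(hder t (interior_subset ht)).deriv]
      exact hnn t (interior_subset ht)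
  have htr : ∑ i, a i = ∑ α, ∑ i, a' α i := by
    rw [← dA.trace_re]
    simp only [← (dA' _).trace_re]
    have : ∀ α, trace (A' α) = trace (A * P α) := by
      intro α
      have := hA' α 1
      rwa [hE1, mul_one, mul_one] at this
    simp only [this]
    rw [← Complex.re_sum, ← trace_sum, ← Finset.mul_sum, hPs, mul_one]
  have hle : ∀ s, 0 < s → G 0 ≤
      Gn U V a b s - ∑ α, Gn (U' α) (V' α) (a' α) (b' α) s := by
    intro s hs
    have h := hmono (Set.mem_Ici.mpr le_rfl) (Set.mem_Ici.mpr (inv_pos.mpr hs).le)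
      (inv_pos.mpr hs).le
    refine h.trans (le_of_eq ?_)
    simp only [hG]
    rw [Fn_eq_Gn a b dA.1 dB.2.1 ha hb s hs]
    have : ∀ α, Fn (U' α) (V' α) (a' α) (b' α) s⁻¹ =
        Gn (U' α) (V' α) (a' α) (b' α) s - (∑ i, a' α i) * Real.log s := fun α =>
      Fn_eq_Gn _ _ (dA' α).1 (dB' α).2.1 (ha' α) (hb' α) s hs
    simp only [this, Finset.sum_sub_distrib, ← Finset.sum_mul]
    rw [htr]; ring
  have hct : ContinuousAt (fun s => Gn U V a b s -
      ∑ α, Gn (U' α) (V' α) (a' α) (b' α) s) 0 :=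
    (Gn_cont U V a b ha).sub (tendsto_finsetSum _ fun α _ => Gn_cont _ _ _ _ (ha' α))
  have hfin := ge_of_tendsto (hct.tendsto.mono_left nhdsWithin_le_nhds)
    (Filter.eventually_of_mem (self_mem_nhdsWithin (s := Set.Ioi (0:ℝ))) fun s hs => hle s hs)
  rw [Gn_zero a b dA.1 dB.2.1] at hfin
  have : ∀ α, Gn (U' α) (V' α) (a' α) (b' α) 0 = ∑ i, a' α i * Real.log (a' α i) := fun α =>
    Gn_zero _ _ (dA' α).1 (dB' α).2.1
  simp only [this] at hfin
  exact hfin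

section conc
variable {n₁ n₂ n₃ : Type*} [Fintype n₁] [Fintype n₂] [Fintype n₃]
    [DecidableEq n₁] [DecidableEq n₂] [DecidableEq n₃]

theorem trace_kron_one (A : Matrix (n₁ × n₂) (n₁ × n₂) ℂ) (C : Matrix n₁ n₁ ℂ) :
    trace (A * (C ⊗ₖ (1 : Matrix n₂ n₂ ℂ))) = trace (ptraceSnd A * C) := by
  simp only [trace, diag_apply, Matrix.mul_apply, ptraceSnd, Matrix.of_apply,
    Fintype.sum_prod_type, kroneckerMap_apply, Matrix.one_apply, mul_ite, mul_one, mul_zero,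
    Finset.sum_ite_eq', Finset.mem_univ, if_true, Finset.sum_mul]
  exact Finset.sum_congr rfl fun i _ => Finset.sum_comm

theorem IsDg.kron {A V : Matrix n₁ n₁ ℂ} {b : n₁ → ℝ} (h : IsDg A V b) :
    IsDg (A ⊗ₖ (1 : Matrix n₂ n₂ ℂ)) (V ⊗ₖ (1 : Matrix n₂ n₂ ℂ)) (fun p => b p.1) := by
  obtain ⟨h1, h2, h3⟩ := h
  refine ⟨?_, ?_, ?_⟩
  · rw [conjTranspose_kronecker, ← mul_kronecker_mul, h1]; simp
  · rw [conjTranspose_kronecker, ← mul_kronecker_mul, h2]; simp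
  · have : diagonal (fun p : n₁ × n₂ => (b p.1 : ℂ)) =
        diagonal (fun i => (b i : ℂ)) ⊗ₖ (1 : Matrix n₂ n₂ ℂ) := by
      rw [← diagonal_one, diagonal_kronecker_diagonal]; simp
    rw [this, conjTranspose_kronecker, ← mul_kronecker_mul, ← mul_kronecker_mul, ← h3]; simp

theorem Fn_zero_kron {A U : Matrix (n₁ × n₂) (n₁ × n₂) ℂ} {a : n₁ × n₂ → ℝ} (hA : IsDg A U a)
    {V : Matrix n₁ n₁ ℂ} {b : n₁ → ℝ} (hB : IsDg (ptraceSnd A) V b) :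
    Fn U (V ⊗ₖ (1 : Matrix n₂ n₂ ℂ)) a (fun p => b p.1) 0 = ∑ i, b i * Real.log (b i) := by
  unfold Fn
  simp only [zero_mul, add_zero]
  rw [hA.sum_wt (V := V ⊗ₖ (1 : Matrix n₂ n₂ ℂ)) (fun p => Real.log (b p.1))]
  have : diagonal (fun p : n₁ × n₂ => (Real.log (b p.1) : ℂ)) =
        diagonal (fun i => (Real.log (b i) : ℂ)) ⊗ₖ (1 : Matrix n₂ n₂ ℂ) := by
      rw [← diagonal_one, diagonal_kronecker_diagonal]; simp
  rw [this, conjTranspose_kronecker, ← mul_kronecker_mul, ← mul_kronecker_mul]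
  simp only [conjTranspose_one, mul_one]
  rw [trace_kron_one, hB.2.2]
  have e : V * diagonal (fun i => (b i : ℂ)) * Vᴴ *
      (V * diagonal (fun i => (Real.log (b i) : ℂ)) * Vᴴ) =
      V * (diagonal (fun i => (b i : ℂ)) * diagonal (fun i => (Real.log (b i) : ℂ)) * Vᴴ) := by
    simp only [Matrix.mul_assoc]
    rw [← Matrix.mul_assoc Vᴴ V, hB.1, Matrix.one_mul]
  rw [e, trace_mul_comm, Matrix.mul_assoc, hB.1, mul_one, diagonal_mul_diagonal, trace_diagonal,
    Complex.re_sum]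
  refine Finset.sum_congr rfl fun i _ => ?_
  rw [← Complex.ofReal_mul, Complex.ofReal_re]

/-- the embedding of operators on `H₂ ⊗ H₃` -/
def emb (Y : Matrix (n₂ × n₃) (n₂ × n₃) ℂ) : Matrix ((n₁ × n₂) × n₃) ((n₁ × n₂) × n₃) ℂ :=
  ((1 : Matrix n₁ n₁ ℂ) ⊗ₖ Y).submatrix (Equiv.prodAssoc n₁ n₂ n₃) (Equiv.prodAssoc n₁ n₂ n₃)

/-- the embedding of operators on `H₁` -/
abbrev emP (n₂ n₃ : Type*) [DecidableEq n₂] [DecidableEq n₃]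
    (P : Matrix n₁ n₁ ℂ) : Matrix ((n₁ × n₂) × n₃) ((n₁ × n₂) × n₃) ℂ :=
  (P ⊗ₖ (1 : Matrix n₂ n₂ ℂ)) ⊗ₖ (1 : Matrix n₃ n₃ ℂ)

theorem emP_eq (P : Matrix n₁ n₁ ℂ) : emP n₂ n₃ P =
    (P ⊗ₖ (1 : Matrix (n₂ × n₃) (n₂ × n₃) ℂ)).submatrix
      (Equiv.prodAssoc n₁ n₂ n₃) (Equiv.prodAssoc n₁ n₂ n₃) := by
  ext ⟨⟨i, j⟩, k⟩ ⟨⟨i', j'⟩, k'⟩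
  simp [Matrix.one_apply, Prod.ext_iff]
  split_ifs <;> simp_all

theorem emb_one : emb (n₁ := n₁) (1 : Matrix (n₂ × n₃) (n₂ × n₃) ℂ) = 1 := by
  simp [emb]

theorem emb_mul (X Y : Matrix (n₂ × n₃) (n₂ × n₃) ℂ) :
    emb (n₁ := n₁) (X * Y) = emb X * emb Y := by
  unfold emb
  rw [submatrix_mul_equiv, ← mul_kronecker_mul, one_mul]

theorem emb_star (X : Matrix (n₂ × n₃) (n₂ × n₃) ℂ) :
    emb (n₁ := n₁) Xᴴ = (emb X)ᴴ := by
  unfold emb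
  rw [conjTranspose_submatrix, conjTranspose_kronecker, conjTranspose_one]

theorem emb_comm (P : Matrix n₁ n₁ ℂ) (X : Matrix (n₂ × n₃) (n₂ × n₃) ℂ) :
    emP n₂ n₃ P * emb X = emb X * emP n₂ n₃ P := by
  rw [emP_eq]
  unfold emb
  rw [submatrix_mul_equiv, submatrix_mul_equiv, ← mul_kronecker_mul, ← mul_kronecker_mul]
  simp

theorem trace_ptraceFst₃ (X : Matrix ((n₁ × n₂) × n₃) ((n₁ × n₂) × n₃) ℂ)
    (Y : Matrix (n₂ × n₃) (n₂ × n₃) ℂ) :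
    trace (ptraceFst₃ X * Y) = trace (X * emb Y) := by
  have h : trace (X * emb Y) = ∑ i : n₁, ∑ p : n₂ × n₃, ∑ q : n₂ × n₃,
      X ((i, p.1), p.2) ((i, q.1), q.2) * Y q p := by
    simp only [trace, diag_apply, Matrix.mul_apply]
    rw [← (Equiv.prodAssoc n₁ n₂ n₃).symm.sum_comp, Fintype.sum_prod_type]
    refine Finset.sum_congr rfl fun i _ => Finset.sum_congr rfl fun p _ => ?_
    rw [← (Equiv.prodAssoc n₁ n₂ n₃).symm.sum_comp, Fintype.sum_prod_type, Finset.sum_comm]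
    refine Finset.sum_congr rfl fun q _ => ?_
    simp [emb, Matrix.one_apply]
  rw [h]
  simp only [trace, diag_apply, Matrix.mul_apply, ptraceFst₃, Matrix.of_apply, Finset.sum_mul]
  symm
  rw [Finset.sum_comm]
  exact Finset.sum_congr rfl fun p _ => Finset.sum_comm

theorem hA'_gen (ρ : Matrix ((n₁ × n₂) × n₃) ((n₁ × n₂) × n₃) ℂ) (P : Matrix n₁ n₁ ℂ)
    (Y : Matrix (n₂ × n₃) (n₂ × n₃) ℂ) :
    trace (ptraceFst₃ (emP n₂ n₃ P * ρ) * Y) = trace (ρ * (emP n₂ n₃ P * emb Y)) := by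
  rw [trace_ptraceFst₃, Matrix.mul_assoc, trace_mul_comm, Matrix.mul_assoc, emb_comm]

theorem ptraceFst₃_kron (B : Matrix (n₁ × n₂) (n₁ × n₂) ℂ) (P : Matrix n₁ n₁ ℂ) :
    ptraceFst₃ (emP n₂ n₃ P * (B ⊗ₖ (1 : Matrix n₃ n₃ ℂ))) =
      ptraceFst ((P ⊗ₖ (1 : Matrix n₂ n₂ ℂ)) * B) ⊗ₖ (1 : Matrix n₃ n₃ ℂ) := by
  rw [emP, ← mul_kronecker_mul, mul_one]
  ext ⟨i, j⟩ ⟨i', j'⟩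
  simp [ptraceFst₃, ptraceFst, Finset.sum_mul]

theorem ptraceSnd_kron_mul (ρ : Matrix (n₁ × n₂) (n₁ × n₂) ℂ) (C : Matrix n₁ n₁ ℂ) :
    ptraceSnd ((C ⊗ₖ (1 : Matrix n₂ n₂ ℂ)) * ρ) = C * ptraceSnd ρ := by
  ext i j
  simp only [ptraceSnd, Matrix.of_apply, Matrix.mul_apply, Fintype.sum_prod_type,
    kroneckerMap_apply, Matrix.one_apply, mul_ite, mul_one, mul_zero, ite_mul, zero_mul,
    Finset.sum_ite_eq, Finset.mem_univ, if_true, Finset.mul_sum]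
  exact Finset.sum_comm

theorem ptrace_swap (ρ : Matrix ((n₁ × n₂) × n₃) ((n₁ × n₂) × n₃) ℂ) (P : Matrix n₁ n₁ ℂ) :
    ptraceSnd (ptraceFst₃ (emP n₂ n₃ P * ρ)) =
      ptraceFst ((P ⊗ₖ (1 : Matrix n₂ n₂ ℂ)) * ptraceSnd ρ) := by
  rw [emP, ← ptraceSnd_kron_mul]
  ext i j
  simp only [ptraceSnd, ptraceFst, ptraceFst₃, Matrix.of_apply]
  exact Finset.sum_comm

theorem ptraceFst_psd {A : Matrix (n₁ × n₂) (n₁ × n₂) ℂ} (hA : A.PosSemidef) :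
    (ptraceFst A).PosSemidef := by
  have : ptraceFst A = ∑ i, A.submatrix (fun j => (i, j)) (fun j => (i, j)) := by
    ext; simp [ptraceFst, Matrix.sum_apply]
  rw [this]
  exact posSemidef_sum _ fun i _ => hA.submatrix _

theorem ptraceSnd_psd {A : Matrix (n₁ × n₂) (n₁ × n₂) ℂ} (hA : A.PosSemidef) :
    (ptraceSnd A).PosSemidef := by
  have : ptraceSnd A = ∑ i, A.submatrix (fun j => (j, i)) (fun j => (j, i)) := by
    ext; simp [ptraceSnd, Matrix.sum_apply]
  rw [this]
  exact posSemidef_sum _ fun i _ => hA.submatrix _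

theorem ptraceFst_cyc (A : Matrix (n₁ × n₂) (n₁ × n₂) ℂ) (C : Matrix n₁ n₁ ℂ) :
    ptraceFst ((C ⊗ₖ (1 : Matrix n₂ n₂ ℂ)) * A) = ptraceFst (A * (C ⊗ₖ (1 : Matrix n₂ n₂ ℂ))) := by
  ext i j
  simp only [ptraceFst, Matrix.of_apply, Matrix.mul_apply, Fintype.sum_prod_type,
    kroneckerMap_apply, Matrix.one_apply, mul_ite, mul_one, mul_zero, ite_mul, zero_mul,
    Finset.sum_ite_eq, Finset.sum_ite_eq', Finset.mem_univ, if_true]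
  rw [Finset.sum_comm]
  exact Finset.sum_congr rfl fun i _ => Finset.sum_congr rfl fun j _ => mul_comm _ _

theorem out_psd {A : Matrix (n₁ × n₂) (n₁ × n₂) ℂ} (hA : A.PosSemidef) {P : Matrix n₁ n₁ ℂ}
    (hP : P.PosSemidef) : (ptraceFst ((P ⊗ₖ (1 : Matrix n₂ n₂ ℂ)) * A)).PosSemidef := by
  obtain ⟨Q, rfl⟩ := psd_factor hP
  have : ((Qᴴ * Q) ⊗ₖ (1 : Matrix n₂ n₂ ℂ)) =
      (Qᴴ ⊗ₖ (1 : Matrix n₂ n₂ ℂ)) * (Q ⊗ₖ (1 : Matrix n₂ n₂ ℂ)) := by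
    rw [← mul_kronecker_mul, mul_one]
  rw [this, Matrix.mul_assoc, ptraceFst_cyc]
  apply ptraceFst_psd
  have h := hA.mul_mul_conjTranspose_same (Q ⊗ₖ (1 : Matrix n₂ n₂ ℂ))
  rwa [conjTranspose_kronecker, conjTranspose_one] at h

theorem ptraceFst₃_eq (A : Matrix ((n₁ × n₂) × n₃) ((n₁ × n₂) × n₃) ℂ) (P : Matrix n₁ n₁ ℂ) :
    ptraceFst₃ (emP n₂ n₃ P * A) =
      ptraceFst ((P ⊗ₖ (1 : Matrix (n₂ × n₃) (n₂ × n₃) ℂ)) *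
        A.submatrix (Equiv.prodAssoc n₁ n₂ n₃).symm (Equiv.prodAssoc n₁ n₂ n₃).symm) := by
  have : (P ⊗ₖ (1 : Matrix (n₂ × n₃) (n₂ × n₃) ℂ)) =
      (emP n₂ n₃ P).submatrix (Equiv.prodAssoc n₁ n₂ n₃).symm (Equiv.prodAssoc n₁ n₂ n₃).symm := by
    rw [emP_eq]; simp
  rw [this, submatrix_mul_equiv]
  rfl

theorem out_psd₃ {A : Matrix ((n₁ × n₂) × n₃) ((n₁ × n₂) × n₃) ℂ} (hA : A.PosSemidef)
    {P : Matrix n₁ n₁ ℂ} (hP : P.PosSemidef) : (ptraceFst₃ (emP n₂ n₃ P * A)).PosSemidef := by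
  rw [ptraceFst₃_eq]
  exact out_psd (hA.submatrix _) hP

theorem emP_psd {P : Matrix n₁ n₁ ℂ} (hP : P.PosSemidef) : (emP n₂ n₃ P).PosSemidef :=
  (hP.kronecker PosSemidef.one).kronecker PosSemidef.one

theorem core {ι : Type*} [Fintype ι]
    {ρ U : Matrix ((n₁ × n₂) × n₃) ((n₁ × n₂) × n₃) ℂ} {a : (n₁ × n₂) × n₃ → ℝ}
    (hρ : ρ.PosSemidef) (dρ : IsDg ρ U a) (ha : ∀ i, 0 < a i)
    {V : Matrix (n₁ × n₂) (n₁ × n₂) ℂ} {b : n₁ × n₂ → ℝ}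
    (dB : IsDg (ptraceSnd ρ) V b) (hb : ∀ i, 0 < b i)
    (P : ι → Matrix n₁ n₁ ℂ) (hP : ∀ α, (P α).PosSemidef) (hPs : ∑ α, P α = 1)
    {U' : ι → Matrix (n₂ × n₃) (n₂ × n₃) ℂ} {a' : ι → n₂ × n₃ → ℝ}
    (dA' : ∀ α, IsDg (ptraceFst₃ (emP n₂ n₃ (P α) * ρ)) (U' α) (a' α)) (ha' : ∀ α i, 0 < a' α i)
    {V' : ι → Matrix n₂ n₂ ℂ} {b' : ι → n₂ → ℝ}
    (dB' : ∀ α, IsDg (ptraceFst ((P α ⊗ₖ (1 : Matrix n₂ n₂ ℂ)) * ptraceSnd ρ)) (V' α) (b' α))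
    (hb' : ∀ α i, 0 < b' α i) :
    ∑ i, negMulLog (a i) - ∑ i, negMulLog (b i) ≤
      ∑ α, ∑ i, negMulLog (a' α i) - ∑ α, ∑ i, negMulLog (b' α i) := by
  have hs : ∑ α, emP n₂ n₃ (P α) = 1 := by
    have : ∑ α, emP n₂ n₃ (P α) = emP n₂ n₃ (∑ α, P α) := by
      ext p q
      simp [Matrix.sum_apply, Finset.sum_mul]
    rw [this, hPs]; simp [emP]
  have h := dpi hρ ((ptraceSnd_psd hρ).kronecker (PosSemidef.one (n := n₃))) dρ dB.kron ha
    (fun p => hb p.1) dA' (fun α => (dB' α).kron (n₂ := n₃)) ha' (fun α p => hb' α p.1)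
    (fun α => emP n₂ n₃ (P α)) (fun α => emP_psd (hP α)) hs emb emb_one emb_mul emb_star
    (fun α Y => emb_comm _ _) (fun α Y => hA'_gen _ _ _)
    (fun α Y => by rw [← ptraceFst₃_kron]; exact hA'_gen _ _ _)
  rw [Fn_zero_kron dρ dB] at h
  have h2 : ∀ α, Fn (U' α) (V' α ⊗ₖ (1 : Matrix n₃ n₃ ℂ)) (a' α) (fun p => b' α p.1) 0 =
      ∑ i, b' α i * Real.log (b' α i) := fun α =>
    Fn_zero_kron (dA' α) (by rw [ptrace_swap]; exact dB' α)
  simp only [h2] at h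
  simp only [negMulLog, neg_mul, Finset.sum_neg_distrib]
  linarith

theorem ptraceSnd_shift (A : Matrix (n₁ × n₂) (n₁ × n₂) ℂ) (c : ℂ) :
    ptraceSnd (A + c • 1) = ptraceSnd A + (c * Fintype.card n₂) • 1 := by
  ext i j
  by_cases h : i = j <;>
  simp [ptraceSnd, Finset.sum_add_distrib, Matrix.one_apply, h, mul_comm]

theorem ptraceFst_shift (A : Matrix (n₁ × n₂) (n₁ × n₂) ℂ) (P : Matrix n₁ n₁ ℂ) (c : ℂ) :
    ptraceFst ((P ⊗ₖ (1 : Matrix n₂ n₂ ℂ)) * (A + c • 1)) =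
      ptraceFst ((P ⊗ₖ (1 : Matrix n₂ n₂ ℂ)) * A) + (c * trace P) • 1 := by
  rw [mul_add, mul_smul_comm, mul_one]
  ext i j
  by_cases h : i = j <;>
  simp [ptraceFst, Finset.sum_add_distrib, h, trace, Finset.mul_sum, mul_comm]

theorem ptraceFst₃_shift (A : Matrix ((n₁ × n₂) × n₃) ((n₁ × n₂) × n₃) ℂ)
    (P : Matrix n₁ n₁ ℂ) (c : ℂ) :
    ptraceFst₃ (emP n₂ n₃ P * (A + c • 1)) =
      ptraceFst₃ (emP n₂ n₃ P * A) + (c * trace P) • 1 := by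
  rw [ptraceFst₃_eq, ptraceFst₃_eq, ← ptraceFst_shift]
  congr 2
  ext p q
  simp [Matrix.one_apply, Prod.ext_iff, and_assoc]

theorem core2 {ι : Type*} [Fintype ι] [Nonempty n₃]
    {ρ : Matrix ((n₁ × n₂) × n₃) ((n₁ × n₂) × n₃) ℂ} (hρ : ρ.PosSemidef)
    (P : ι → Matrix n₁ n₁ ℂ) (hP : ∀ α, (P α).PosSemidef) (hP0 : ∀ α, P α ≠ 0)
    (hPs : ∑ α, P α = 1) :
    entropy ρ - entropy (ptraceSnd ρ) ≤
      (∑ α, entropy (ptraceFst₃ (emP n₂ n₃ (P α) * ρ)))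
        - ∑ α, entropy (ptraceFst ((P α ⊗ₖ (1 : Matrix n₂ n₂ ℂ)) * ptraceSnd ρ)) := by
  have p1 := ptraceSnd_psd hρ
  have p2 := fun α => out_psd₃ hρ (hP α)
  have p3 := fun α => out_psd p1 (hP α)
  have ht : ∀ α, ∃ r : ℝ, 0 < r ∧ trace (P α) = r := by
    intro α
    have h0 := (hP α).trace_nonneg
    have h1 : trace (P α) ≠ 0 := fun h => hP0 α ((hP α).trace_eq_zero_iff.mp h)
    have h2 := Complex.nonneg_iff.mp h0
    have h3 : trace (P α) = ((trace (P α)).re : ℂ) := by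
      apply Complex.ext <;> simp [← h2.2]
    refine ⟨(trace (P α)).re, lt_of_le_of_ne h2.1 fun h => h1 ?_, h3⟩
    rw [h3, ← h]; simp
  choose r hr hr' using ht
  obtain ⟨U, dU⟩ := IsDg.of_herm hρ.1
  obtain ⟨V, dV⟩ := IsDg.of_herm p1.1
  choose U' dU' using fun α => IsDg.of_herm (p2 α).1
  choose V' dV' using fun α => IsDg.of_herm (p3 α).1
  have hd : (0 : ℝ) < Fintype.card n₃ := by exact_mod_cast Fintype.card_pos
  set d : ℝ := (Fintype.card n₃ : ℝ) with hd'
  have key : ∀ ε : ℝ, 0 < ε →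
      ∑ i, negMulLog (hρ.1.eigenvalues i + ε) - ∑ i, negMulLog (p1.1.eigenvalues i + ε * d) ≤
      ∑ α, ∑ i, negMulLog ((p2 α).1.eigenvalues i + ε * r α) -
        ∑ α, ∑ i, negMulLog ((p3 α).1.eigenvalues i + ε * d * r α) := by
    intro ε hε
    have e1 : ptraceSnd (ρ + (ε : ℂ) • 1) = ptraceSnd ρ + ((ε * d : ℝ) : ℂ) • 1 := by
      rw [ptraceSnd_shift, hd']; push_cast; rfl
    refine core (ρ := ρ + (ε : ℂ) • 1) (hρ.add (PosSemidef.one.smul ?_)) (dU.shift ε) ?_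
      (V := V) ?_ ?_ P hP hPs (U' := U') ?_ ?_ (V' := V') ?_ ?_
    · exact_mod_cast hε.le
    · intro i; have := hρ.eigenvalues_nonneg i; positivity
    · rw [e1]; exact dV.shift _
    · intro i; have := p1.eigenvalues_nonneg i; positivity
    · intro α
      rw [ptraceFst₃_shift, hr', ← Complex.ofReal_mul]
      exact (dU' α).shift _
    · intro α i; have := (p2 α).eigenvalues_nonneg i; have := hr α; positivity
    · intro α
      rw [e1, ptraceFst_shift, hr', ← Complex.ofReal_mul]
      exact (dV' α).shift _
    · intro α i; have := (p3 α).eigenvalues_nonneg i; have := hr α; positivity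
  have hc := Real.continuous_negMulLog
  have l1 : Continuous fun ε : ℝ => ∑ i, negMulLog (hρ.1.eigenvalues i + ε) -
      ∑ i, negMulLog (p1.1.eigenvalues i + ε * d) := by fun_prop
  have l2 : Continuous fun ε : ℝ =>
      ∑ α, ∑ i, negMulLog ((p2 α).1.eigenvalues i + ε * r α) -
        ∑ α, ∑ i, negMulLog ((p3 α).1.eigenvalues i + ε * d * r α) := by fun_prop
  have := le_of_tendsto_of_tendsto ((l1.tendsto 0).mono_left nhdsWithin_le_nhds)
    ((l2.tendsto 0).mono_left nhdsWithin_le_nhds)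
    (Filter.eventually_of_mem (self_mem_nhdsWithin (s := Set.Ioi (0:ℝ))) fun s hs => key s hs)
  simp only [zero_mul, add_zero] at this
  have q2 : ∀ α, entropy (ptraceFst₃ (emP n₂ n₃ (P α) * ρ)) =
      ∑ i, negMulLog ((p2 α).1.eigenvalues i) := fun α => dif_pos (p2 α).1
  have q3 : ∀ α, entropy (ptraceFst ((P α ⊗ₖ (1 : Matrix n₂ n₂ ℂ)) * ptraceSnd ρ)) =
      ∑ i, negMulLog ((p3 α).1.eigenvalues i) := fun α => dif_pos (p3 α).1
  simp only [q2, q3]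
  rw [entropy, entropy, dif_pos hρ.1, dif_pos p1.1]
  exact this

end conc

theorem entropy_zero {n : Type*} [Fintype n] [DecidableEq n] :
    entropy (0 : Matrix n n ℂ) = 0 := by
  rw [entropy, dif_pos isHermitian_zero]
  have : (isHermitian_zero (n := n) (α := ℂ)).eigenvalues = 0 :=
    (IsHermitian.eigenvalues_eq_zero_iff _).mpr rfl
  simp [this]

/-- **Partially classical form of stronger subadditivity**:
`S[ρ₁₂₃] − S[ρ₁₂] ≤ S^{cl,Q,Q}[ρ₁₂₃] − S^{cl,Q}[ρ₁₂]`. -/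
theorem partially_classical_stronger_subadditivity
    {n₁ n₂ n₃ : Type*} [Fintype n₁] [Fintype n₂] [Fintype n₃]
    [DecidableEq n₁] [DecidableEq n₂] [DecidableEq n₃] {M : ℕ}
    (ρ : Matrix ((n₁ × n₂) × n₃) ((n₁ × n₂) × n₃) ℂ)
    (hρ : ρ.PosSemidef) (hρtr : ρ.trace = 1)
    (P : Fin M → Matrix n₁ n₁ ℂ) (hP : ∀ α, (P α).PosSemidef)
    (hPsum : ∑ α, P α = 1) :
    entropy ρ - entropy (ptraceSnd ρ) ≤
      (∑ α, entropy (ptraceFst₃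
          (((P α ⊗ₖ (1 : Matrix n₂ n₂ ℂ)) ⊗ₖ (1 : Matrix n₃ n₃ ℂ)) * ρ)))
        - ∑ α, entropy (ptraceFst ((P α ⊗ₖ (1 : Matrix n₂ n₂ ℂ)) * ptraceSnd ρ)) := by
  have hne : Nonempty n₃ := by
    by_contra h
    rw [not_nonempty_iff] at h
    simp [trace] at hρtr
  classical
  have s : ∀ (f : Fin M → ℝ), (∀ α, P α = 0 → f α = 0) →
      ∑ α : {α // P α ≠ 0}, f α = ∑ α, f α := fun f hf => by
    rw [← Finset.sum_subtype (Finset.univ.filter fun α => P α ≠ 0) (by simp) f]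
    refine Finset.sum_subset (Finset.subset_univ _) fun α _ h => hf α ?_
    simpa using h
  have s' : ∀ (f : Fin M → Matrix n₁ n₁ ℂ), (∀ α, P α = 0 → f α = 0) →
      ∑ α : {α // P α ≠ 0}, f α = ∑ α, f α := fun f hf => by
    rw [← Finset.sum_subtype (Finset.univ.filter fun α => P α ≠ 0) (by simp) f]
    refine Finset.sum_subset (Finset.subset_univ _) fun α _ h => hf α ?_
    simpa using h
  have h := core2 hρ (fun α : {α // P α ≠ 0} => P α) (fun α => hP α) (fun α => α.2) (by
    rw [← hPsum]
    exact s' P fun _ h => h)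
  rw [s (fun α => entropy (ptraceFst₃ (emP n₂ n₃ (P α) * ρ))) ?_,
    s (fun α => entropy (ptraceFst ((P α ⊗ₖ (1 : Matrix n₂ n₂ ℂ)) * ptraceSnd ρ))) ?_] at h
  · exact h
  · intro α hα
    have : ptraceFst (0 : Matrix (n₁ × n₂) (n₁ × n₂) ℂ) = 0 := by ext; simp [ptraceFst]
    simp [hα, this, entropy_zero]
  · intro α hα
    have : ptraceFst₃ (0 : Matrix ((n₁ × n₂) × n₃) ((n₁ × n₂) × n₃) ℂ) = 0 := by
      ext; simp [ptraceFst₃]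
    simp [hα, this, entropy_zero, emP]
end

section
/- Convexity of classical minus quantum entropy (Corollary 6): Let P^1,…,P^M be positive semidefinite operators on H₁ with ∑_α P^α = id_{H₁}, and define S^{cl,Q}[ρ₁₂] = ∑_α S[ Tr₁[(P^α⊗id₂) ρ₁₂] ] for density matrices ρ₁₂ on H₁⊗H₂. Then the map ρ₁₂ ↦ S^{cl,Q}[ρ₁₂] − S[ρ₁₂] is convex on the set of density matrices on H₁⊗H₂: for density matrices A₁₂, B₁₂ and t ∈ [0,1], S^{cl,Q}[tA₁₂+(1−t)B₁₂] − S[tA₁₂+(1−t)B₁₂] ≤ t( S^{cl,Q}[A₁₂] − S[A₁₂] ) + (1−t)( S^{cl,Q}[B₁₂] − S[B₁₂] ). -/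
open Matrix Kronecker Real
open scoped ComplexOrder

theorem var_form {n : Type*} [Fintype n] [DecidableEq n] (A B U V X : Matrix n n ℂ) (a b : n → ℝ)
    (hU : Uᴴ * U = 1) (hU' : U * Uᴴ = 1) (hV' : V * Vᴴ = 1)
    (hA : A = U * diagonal (fun i => (a i : ℂ)) * Uᴴ)
    (hB : B = V * diagonal (fun i => (b i : ℂ)) * Vᴴ) (s : ℝ) :
    2 * (Xᴴ * A).trace.re - (X * Xᴴ * B).trace.re - s * (Xᴴ * X * A).trace.re =
      ∑ i, ∑ j, (2 * (star ((Vᴴ * X * U) j i) * (Vᴴ * U) j i).re * a i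
        - (b j + s * a i) * ‖(Vᴴ * X * U) j i‖ ^ 2) := by
  have h1 : (Xᴴ * A).trace = ((Vᴴ * X * U)ᴴ * (Vᴴ * U) * diagonal (fun i => (a i : ℂ))).trace := by
    rw [hA, ← Matrix.mul_assoc, Matrix.trace_mul_comm, ← Matrix.mul_assoc, ← Matrix.mul_assoc]
    simp only [conjTranspose_mul, conjTranspose_conjTranspose, Matrix.mul_assoc]
    rw [← Matrix.mul_assoc V, hV', Matrix.one_mul]
  have h2 : (X * Xᴴ * B).trace = ((Vᴴ * X * U) * (Vᴴ * X * U)ᴴ * diagonal (fun i => (b i : ℂ))).trace := by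
    rw [hB, ← Matrix.mul_assoc, Matrix.trace_mul_comm, ← Matrix.mul_assoc, ← Matrix.mul_assoc]
    simp only [conjTranspose_mul, conjTranspose_conjTranspose, Matrix.mul_assoc]
    rw [← Matrix.mul_assoc U, hU', Matrix.one_mul]
  have h3 : (Xᴴ * X * A).trace = ((Vᴴ * X * U)ᴴ * (Vᴴ * X * U) * diagonal (fun i => (a i : ℂ))).trace := by
    rw [hA, ← Matrix.mul_assoc, Matrix.trace_mul_comm, ← Matrix.mul_assoc, ← Matrix.mul_assoc]
    simp only [conjTranspose_mul, conjTranspose_conjTranspose, Matrix.mul_assoc]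
    rw [← Matrix.mul_assoc V, hV', Matrix.one_mul]
  rw [h1, h2, h3]
  generalize Vᴴ * X * U = x
  generalize Vᴴ * U = W
  have key : ∀ z : ℂ, (star z * z).re = ‖z‖ ^ 2 := by
    intro z
    rw [← Complex.normSq_eq_norm_sq, Complex.normSq_apply]; simp
  have e1 : (xᴴ * W * diagonal (fun i => (a i : ℂ))).trace.re
      = ∑ i, ∑ j, (star (x j i) * W j i).re * a i := by
    simp only [trace, diag, mul_diagonal]
    simp only [mul_apply, conjTranspose_apply, Complex.re_sum, Complex.re_mul_ofReal,
      Finset.sum_mul]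
  have e3 : (xᴴ * x * diagonal (fun i => (a i : ℂ))).trace.re
      = ∑ i, ∑ j, ‖x j i‖ ^ 2 * a i := by
    simp only [trace, diag, mul_diagonal]
    simp only [mul_apply, conjTranspose_apply, Complex.re_sum, Complex.re_mul_ofReal,
      Finset.sum_mul, key]
  have e2 : (x * xᴴ * diagonal (fun i => (b i : ℂ))).trace.re
      = ∑ i, ∑ j, ‖x j i‖ ^ 2 * b j := by
    rw [Finset.sum_comm]
    simp only [trace, diag, mul_diagonal]
    simp only [mul_apply, conjTranspose_apply, Complex.re_sum, Complex.re_mul_ofReal,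
      Finset.sum_mul, mul_comm _ (star _), key]
  rw [e1, e2, e3]
  simp only [Finset.mul_sum, ← Finset.sum_sub_distrib]
  refine Finset.sum_congr rfl fun i _ => Finset.sum_congr rfl fun j _ => ?_
  ring

/-- the quadratic quantity -/
noncomputable def qf {n : Type*} [Fintype n] (W : Matrix n n ℂ) (a b : n → ℝ) (s : ℝ) : ℝ :=
  ∑ i, ∑ j, ‖W j i‖ ^ 2 * a i * (a i / (b j + s * a i))

theorem var_le {n : Type*} [Fintype n] [DecidableEq n] (A B U V X : Matrix n n ℂ) (a b : n → ℝ)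
    (hU : Uᴴ * U = 1) (hU' : U * Uᴴ = 1) (hV' : V * Vᴴ = 1)
    (hA : A = U * diagonal (fun i => (a i : ℂ)) * Uᴴ)
    (hB : B = V * diagonal (fun i => (b i : ℂ)) * Vᴴ) (s : ℝ) (hs : 0 < s)
    (ha : ∀ i, 0 ≤ a i) (hb : ∀ i, 0 ≤ b i) :
    2 * (Xᴴ * A).trace.re - (X * Xᴴ * B).trace.re - s * (Xᴴ * X * A).trace.re ≤
      qf (Vᴴ * U) a b s := by
  rw [var_form A B U V X a b hU hU' hV' hA hB s]
  refine Finset.sum_le_sum fun i _ => Finset.sum_le_sum fun j _ => ?_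
  generalize (Vᴴ * X * U) j i = x
  generalize (Vᴴ * U) j i = w
  have h1 : (star x * w).re ≤ ‖x‖ * ‖w‖ := by
    refine (Complex.re_le_norm _).trans ?_
    simp
  rcases (ha i).eq_or_lt with h | h
  · rw [← h]; simp
    have := hb j; positivity
  · have hd : 0 < b j + s * a i := by have := hb j; positivity
    have h2 : (star x * w).re * a i ≤ ‖x‖ * ‖w‖ * a i := by gcongr
    have h3 : ‖w‖ ^ 2 * a i * (a i / (b j + s * a i)) - (2 * (‖x‖ * ‖w‖ * a i) - (b j + s * a i) * ‖x‖ ^ 2)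
        = (‖w‖ * a i - (b j + s * a i) * ‖x‖) ^ 2 / (b j + s * a i) := by
      have hd' := hd.ne'
      generalize b j + s * a i = d at hd'
      field_simp; ring
    have h4 : 0 ≤ (‖w‖ * a i - (b j + s * a i) * ‖x‖) ^ 2 / (b j + s * a i) := by positivity
    linarith

theorem var_attained {n : Type*} [Fintype n] [DecidableEq n] (A B U V : Matrix n n ℂ) (a b : n → ℝ)
    (hU : Uᴴ * U = 1) (hU' : U * Uᴴ = 1) (hV : Vᴴ * V = 1) (hV' : V * Vᴴ = 1)
    (hA : A = U * diagonal (fun i => (a i : ℂ)) * Uᴴ)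
    (hB : B = V * diagonal (fun i => (b i : ℂ)) * Vᴴ) (s : ℝ) (hs : 0 < s)
    (ha : ∀ i, 0 ≤ a i) (hb : ∀ i, 0 ≤ b i) :
    ∃ X : Matrix n n ℂ,
    2 * (Xᴴ * A).trace.re - (X * Xᴴ * B).trace.re - s * (Xᴴ * X * A).trace.re =
      qf (Vᴴ * U) a b s := by
  set W := Vᴴ * U with hW
  refine ⟨V * (Matrix.of fun j i => W j i * ((a i / (b j + s * a i) : ℝ) : ℂ)) * Uᴴ, ?_⟩
  rw [var_form A B U V _ a b hU hU' hV' hA hB s]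
  have : Vᴴ * (V * (Matrix.of fun j i => W j i * ((a i / (b j + s * a i) : ℝ) : ℂ)) * Uᴴ) * U
      = (Matrix.of fun j i => W j i * ((a i / (b j + s * a i) : ℝ) : ℂ)) := by
    simp only [Matrix.mul_assoc, hU, Matrix.mul_one]
    rw [← Matrix.mul_assoc, hV, Matrix.one_mul]
  rw [this]
  refine Finset.sum_congr rfl fun i _ => Finset.sum_congr rfl fun j _ => ?_
  rw [← hW, Matrix.of_apply]
  generalize W j i = w
  have key : ∀ r : ℝ, (star (w * (r : ℂ)) * w).re = r * ‖w‖ ^ 2 := by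
    intro z
    rw [← Complex.normSq_eq_norm_sq, Complex.normSq_apply]; simp; ring
  rw [key, norm_mul, Complex.norm_real, mul_pow, Real.norm_eq_abs, sq_abs]
  rcases (ha i).eq_or_lt with h | h
  · rw [← h]; simp
  · have hd : 0 < b j + s * a i := by have := hb j; positivity
    field_simp; ring

/-- the logarithmic primitive -/
noncomputable def lf {n : Type*} [Fintype n] (W : Matrix n n ℂ) (a b : n → ℝ) (s : ℝ) : ℝ :=
  ∑ i, ∑ j, ‖W j i‖ ^ 2 * a i * Real.log (b j + s * a i)

theorem lf_deriv {n : Type*} [Fintype n] (W : Matrix n n ℂ) (a b : n → ℝ) (s : ℝ) (hs : 0 < s)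
    (ha : ∀ i, 0 ≤ a i) (hb : ∀ i, 0 ≤ b i) : HasDerivAt (lf W a b) (qf W a b s) s := by
  unfold lf qf
  refine HasDerivAt.fun_sum fun i _ => HasDerivAt.fun_sum fun j _ => ?_
  rcases (ha i).eq_or_lt with h | h
  · rw [← h]; simpa using hasDerivAt_const s (0:ℝ)
  · have hd : 0 < b j + s * a i := by have := hb j; positivity
    refine HasDerivAt.const_mul _ ?_
    refine HasDerivAt.log ?_ hd.ne'
    simpa using ((hasDerivAt_id s).mul_const (a i)).const_add (b j)

theorem lf_cont {n : Type*} [Fintype n] (W : Matrix n n ℂ) (a b : n → ℝ)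
    (ha : ∀ i, 0 ≤ a i) (hb : ∀ i, 0 ≤ b i) (h0 : ∀ i j, b j = 0 → ‖W j i‖ ^ 2 * a i = 0) :
    ContinuousOn (lf W a b) (Set.Ici 0) := by
  unfold lf
  refine continuousOn_finsetSum _ fun i _ => continuousOn_finsetSum _ fun j _ => ?_
  rcases (hb j).eq_or_lt with h | h
  · rw [h0 i j h.symm]; simpa using continuousOn_const
  · refine ContinuousOn.mul continuousOn_const (ContinuousOn.log (by fun_prop) ?_)
    intro s hs
    have := mul_nonneg hs (ha i)
    positivity

theorem lf_lim {n : Type*} [Fintype n] (W : Matrix n n ℂ) (a b : n → ℝ)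
    (ha : ∀ i, 0 ≤ a i) (hb : ∀ i, 0 ≤ b i) (hW : ∀ i, ∑ j, ‖W j i‖ ^ 2 = 1) :
    Filter.Tendsto (fun s => lf W a b s - (∑ i, a i) * Real.log s) Filter.atTop
      (nhds (- ∑ i, Real.negMulLog (a i))) := by
  have e1 : - ∑ i, Real.negMulLog (a i) = ∑ i, ∑ j, ‖W j i‖ ^ 2 * a i * Real.log (a i) := by
    rw [← Finset.sum_neg_distrib]
    refine Finset.sum_congr rfl fun i _ => ?_
    rw [← Finset.sum_mul, ← Finset.sum_mul, hW, Real.negMulLog]; ring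
  have e2 : ∀ s, lf W a b s - (∑ i, a i) * Real.log s =
      ∑ i, ∑ j, ‖W j i‖ ^ 2 * a i * (Real.log (b j + s * a i) - Real.log s) := by
    intro s
    have : (∑ i, a i) * Real.log s = ∑ i, ∑ j, ‖W j i‖ ^ 2 * a i * Real.log s := by
      rw [Finset.sum_mul]
      refine Finset.sum_congr rfl fun i _ => ?_
      rw [← Finset.sum_mul, ← Finset.sum_mul, hW]; ring
    rw [this, lf]
    simp only [← Finset.sum_sub_distrib, mul_sub]
  rw [e1]
  simp only [e2]
  refine tendsto_finsetSum _ fun i _ => tendsto_finsetSum _ fun j _ => ?_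
  rcases (ha i).eq_or_lt with h | h
  · rw [← h]; simp
  · refine Filter.Tendsto.const_mul _ ?_
    have h1 : Filter.Tendsto (fun s : ℝ => Real.log (b j / s + a i)) Filter.atTop
        (nhds (Real.log (a i))) := by
      have h2 : Filter.Tendsto (fun s : ℝ => b j / s + a i) Filter.atTop (nhds (0 + a i)) :=
        (Filter.Tendsto.const_div_atTop Filter.tendsto_id _).add_const _
      rw [zero_add] at h2
      exact h2.log h.ne'
    refine h1.congr' ?_
    filter_upwards [Filter.eventually_gt_atTop 0] with s hs
    have hd : 0 < b j + s * a i := by have := hb j; positivity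
    rw [← Real.log_div hd.ne' hs.ne']
    congr 1
    field_simp

theorem ptrace_comm {m k : Type*} [Fintype m] [Fintype k] [DecidableEq k] (Q : Matrix m m ℂ)
    (M : Matrix (m × k) (m × k) ℂ) :
    ptraceFst ((Q ⊗ₖ (1 : Matrix k k ℂ)) * M) = ptraceFst (M * (Q ⊗ₖ (1 : Matrix k k ℂ))) := by
  ext i j
  simp only [ptraceFst, of_apply, mul_apply, kroneckerMap_apply, Fintype.sum_prod_type, one_apply]
  simp
  rw [Finset.sum_comm]
  simp only [mul_comm]

theorem ptrace_psd {m k : Type*} [Fintype m] [Fintype k] (M : Matrix (m × k) (m × k) ℂ)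
    (hM : M.PosSemidef) : (ptraceFst M).PosSemidef := by
  have : ptraceFst M = ∑ a, M.submatrix (fun i => (a, i)) (fun i => (a, i)) := by
    ext i j
    simp [ptraceFst, Matrix.sum_apply]
  rw [this]
  exact posSemidef_sum _ fun a _ => hM.submatrix _

open scoped MatrixOrder in
theorem psd_sq {m : Type*} [Fintype m] [DecidableEq m] (P : Matrix m m ℂ)
    (hP : P.PosSemidef) : ∃ Q : Matrix m m ℂ, P = Qᴴ * Q :=
  CStarAlgebra.nonneg_iff_eq_star_mul_self.mp hP.nonneg

theorem ptraceP_psd {m k : Type*} [Fintype m] [Fintype k] [DecidableEq m] [DecidableEq k] (P : Matrix m m ℂ)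
    (hP : P.PosSemidef)
    (M : Matrix (m × k) (m × k) ℂ)
    (hM : M.PosSemidef) : (ptraceFst ((P ⊗ₖ (1 : Matrix k k ℂ)) * M)).PosSemidef := by
  obtain ⟨Q, rfl⟩ : ∃ Q : Matrix m m ℂ, P = Qᴴ * Q := psd_sq P hP
  have : (Qᴴ * Q) ⊗ₖ (1 : Matrix k k ℂ) = (Qᴴ ⊗ₖ (1 : Matrix k k ℂ)) * (Q ⊗ₖ (1 : Matrix k k ℂ)) := by
    rw [← mul_kronecker_mul, Matrix.one_mul]
  rw [this, Matrix.mul_assoc, ptrace_comm]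
  apply ptrace_psd
  have h2 : Qᴴ ⊗ₖ (1 : Matrix k k ℂ) = (Q ⊗ₖ (1 : Matrix k k ℂ))ᴴ := by
    rw [conjTranspose_kronecker]; simp
  rw [h2]
  exact hM.mul_mul_conjTranspose_same _

theorem trace_kron {m k : Type*} [Fintype m] [Fintype k] [DecidableEq m] [DecidableEq k] (P : Matrix m m ℂ)
    (Y : Matrix k k ℂ) (M : Matrix (m × k) (m × k) ℂ) :
    ((P ⊗ₖ Y) * M).trace = (Y * ptraceFst ((P ⊗ₖ (1 : Matrix k k ℂ)) * M)).trace := by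
  simp only [trace, diag, ptraceFst, of_apply, mul_apply, kroneckerMap_apply, Fintype.sum_prod_type, one_apply]
  simp
  simp only [Finset.mul_sum]
  rw [Finset.sum_comm]
  refine Finset.sum_congr rfl fun i _ => ?_
  calc _ = ∑ x : m, ∑ j : k, ∑ b : m, P x b * Y i j * M (b, j) (x, i) :=
        Finset.sum_congr rfl fun x _ => Finset.sum_comm
    _ = ∑ j : k, ∑ x : m, ∑ b : m, P x b * Y i j * M (b, j) (x, i) := Finset.sum_comm
    _ = _ := by
      refine Finset.sum_congr rfl fun j _ => Finset.sum_congr rfl fun x _ =>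
        Finset.sum_congr rfl fun b _ => ?_
      ring

/-- spectral decomposition data -/
structure Dec {n : Type*} [Fintype n] [DecidableEq n] (A U : Matrix n n ℂ) (a : n → ℝ) : Prop where
  u1 : Uᴴ * U = 1
  u2 : U * Uᴴ = 1
  eq : A = U * diagonal (fun i => (a i : ℂ)) * Uᴴ
  nn : ∀ i, 0 ≤ a i

theorem exists_dec {n : Type*} [Fintype n] [DecidableEq n] (A : Matrix n n ℂ) (hA : A.PosSemidef) :
    ∃ (U : Matrix n n ℂ) (a : n → ℝ), Dec A U a ∧ entropy A = ∑ i, Real.negMulLog (a i) := by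
  refine ⟨hA.1.eigenvectorUnitary, hA.1.eigenvalues, ⟨?_, ?_, ?_, hA.eigenvalues_nonneg⟩, ?_⟩
  · exact Unitary.coe_star_mul_self hA.1.eigenvectorUnitary
  · exact Unitary.coe_mul_star_self hA.1.eigenvectorUnitary
  · exact hA.1.spectral_theorem
  · simp [entropy, hA.1]

theorem sum_wt {n : Type*} [Fintype n] [DecidableEq n] (W : Matrix n n ℂ) (h : Wᴴ * W = 1) (i : n) :
    ∑ j, ‖W j i‖ ^ 2 = 1 := by
  have := congrFun (congrFun h i) i
  rw [mul_apply, one_apply_eq] at this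
  have h2 := congrArg Complex.re this
  rw [Complex.re_sum, Complex.one_re] at h2
  rw [← h2]
  refine Finset.sum_congr rfl fun j _ => ?_
  rw [conjTranspose_apply, ← Complex.normSq_eq_norm_sq, Complex.normSq_apply]; simp

theorem wt_unit {n : Type*} [Fintype n] [DecidableEq n] {A B U V : Matrix n n ℂ} {a b : n → ℝ}
    (hA : Dec A U a) (hB : Dec B V b) : (Vᴴ * U)ᴴ * (Vᴴ * U) = 1 := by
  simp only [conjTranspose_mul, conjTranspose_conjTranspose, Matrix.mul_assoc]
  rw [← Matrix.mul_assoc V, hB.u2, Matrix.one_mul, hA.u1]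

theorem diag_form {n : Type*} [Fintype n] [DecidableEq n] {A U : Matrix n n ℂ} {a : n → ℝ}
    (hA : Dec A U a) (V : Matrix n n ℂ) (j : n) :
    ((Vᴴ * A * V) j j).re = ∑ i, ‖(Vᴴ * U) j i‖ ^ 2 * a i := by
  have : Vᴴ * A * V = (Vᴴ * U) * diagonal (fun i => (a i : ℂ)) * (Vᴴ * U)ᴴ := by
    rw [hA.eq]
    simp only [conjTranspose_mul, conjTranspose_conjTranspose, Matrix.mul_assoc]
  rw [this, mul_apply, Complex.re_sum]
  refine Finset.sum_congr rfl fun i _ => ?_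
  rw [mul_diagonal, conjTranspose_apply, ← Complex.normSq_eq_norm_sq, Complex.normSq_apply]
  simp; ring

theorem Dec.diag {n : Type*} [Fintype n] [DecidableEq n] {A U : Matrix n n ℂ} {a : n → ℝ}
    (hA : Dec A U a) : Uᴴ * A * U = diagonal (fun i => (a i : ℂ)) := by
  rw [hA.eq]
  simp only [Matrix.mul_assoc, hA.u1, Matrix.mul_one]
  rw [← Matrix.mul_assoc, hA.u1, Matrix.one_mul]

theorem Dec.trace {n : Type*} [Fintype n] [DecidableEq n] {A U : Matrix n n ℂ} {a : n → ℝ}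
    (hA : Dec A U a) : A.trace.re = ∑ i, a i := by
  rw [hA.eq, Matrix.trace_mul_comm, ← Matrix.mul_assoc, hA.u1, Matrix.one_mul]
  simp [Matrix.trace]

theorem supp {n : Type*} [Fintype n] [DecidableEq n] {A C U V : Matrix n n ℂ} {a c : n → ℝ}
    (hA : Dec A U a) (hC : Dec C V c) (τ : ℝ) (hτ : 0 < τ) (h : (C - (τ : ℂ) • A).PosSemidef)
    (i j : n) (hj : c j = 0) : ‖(Vᴴ * U) j i‖ ^ 2 * a i = 0 := by
  have h1 := (h.conjTranspose_mul_mul_same V).diag_nonneg (i := j)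
  rw [Matrix.mul_sub, Matrix.sub_mul, hC.diag, Matrix.mul_smul, Matrix.smul_mul] at h1
  have h2 := (Complex.le_def.1 h1).1
  simp only [Complex.zero_re, Complex.neg_re, Matrix.sub_apply, diagonal_apply_eq, hj, Matrix.smul_apply, Complex.sub_re,
    smul_eq_mul, Complex.re_ofReal_mul, diag_form hA, Complex.ofReal_zero, zero_sub] at h2
  have h3 : ∀ i ∈ Finset.univ, 0 ≤ ‖(Vᴴ * U) j i‖ ^ 2 * a i := fun i _ => by
    have := hA.nn i; positivity
  have h4 : ∑ i, ‖(Vᴴ * U) j i‖ ^ 2 * a i = 0 := by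
    have := Finset.sum_nonneg h3
    nlinarith
  exact (Finset.sum_eq_zero_iff_of_nonneg h3).1 h4 i (Finset.mem_univ _)

theorem lf_zero {n : Type*} [Fintype n] [DecidableEq n] {A U V : Matrix n n ℂ} {a : n → ℝ} (c : n → ℝ)
    (hA : Dec A U a) :
    lf (Vᴴ * U) a c 0 = ∑ j, ((Vᴴ * A * V) j j).re * Real.log (c j) := by
  simp only [lf, zero_mul, add_zero, diag_form hA, Finset.sum_mul]
  exact Finset.sum_comm

theorem lf_mix {n : Type*} [Fintype n] [DecidableEq n] {A B U₁ U₂ V : Matrix n n ℂ} {a b c : n → ℝ}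
    (t : ℝ) (hA : Dec A U₁ a) (hB : Dec B U₂ b)
    (hC : Dec ((t : ℂ) • A + ((1 - t : ℝ) : ℂ) • B) V c) :
    t * lf (Vᴴ * U₁) a c 0 + (1 - t) * lf (Vᴴ * U₂) b c 0 = - ∑ i, Real.negMulLog (c i) := by
  rw [lf_zero c hA, lf_zero c hB, Finset.mul_sum, Finset.mul_sum, ← Finset.sum_add_distrib,
    ← Finset.sum_neg_distrib]
  refine Finset.sum_congr rfl fun j _ => ?_
  have h := congrArg Complex.re (congrFun (congrFun hC.diag j) j)
  simp only [Matrix.mul_add, Matrix.add_mul, Matrix.mul_smul, Matrix.smul_mul, Matrix.add_apply, Matrix.smul_apply,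
    smul_eq_mul, Complex.add_re, Complex.re_ofReal_mul, diagonal_apply_eq, Complex.ofReal_re] at h
  rw [Real.negMulLog, neg_mul, neg_neg]
  nth_rewrite 3 [← h]
  ring

theorem trace_mul_psd {n : Type*} [Fintype n] [DecidableEq n] {A B : Matrix n n ℂ}
    (hA : A.PosSemidef) (hB : B.PosSemidef) : 0 ≤ (A * B).trace.re := by
  obtain ⟨Q, rfl⟩ := psd_sq A hA
  rw [Matrix.mul_assoc, Matrix.trace_mul_comm]
  exact (Complex.le_def.1 (hB.mul_mul_conjTranspose_same Q).trace_nonneg).1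

theorem kadison {m k : Type*} [Fintype m] [Fintype k] [DecidableEq m] [DecidableEq k] {M : ℕ}
    (P : Fin M → Matrix m m ℂ) (hP : ∀ α, (P α).PosSemidef) (hPsum : ∑ α, P α = 1)
    (Y : Fin M → Matrix k k ℂ) :
    ((∑ α, P α ⊗ₖ (Y α * (Y α)ᴴ)) - (∑ α, P α ⊗ₖ Y α) * (∑ α, P α ⊗ₖ Y α)ᴴ).PosSemidef := by
  set X := ∑ α, P α ⊗ₖ Y α with hX
  have hone : ∑ α, P α ⊗ₖ (1 : Matrix k k ℂ) = 1 := by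
    rw [← Matrix.one_kronecker_one, ← hPsum]
    ext i j
    simp [Matrix.sum_apply, Finset.sum_mul]
  have hXs : Xᴴ = ∑ α, P α ⊗ₖ (Y α)ᴴ := by
    rw [hX, conjTranspose_sum]
    refine Finset.sum_congr rfl fun α _ => ?_
    rw [conjTranspose_kronecker, (hP α).1.eq]
  have e : (∑ α, P α ⊗ₖ (Y α * (Y α)ᴴ)) - X * Xᴴ =
      ∑ α, ((1 : Matrix m m ℂ) ⊗ₖ Y α - X) * (P α ⊗ₖ (1 : Matrix k k ℂ)) * ((1 : Matrix m m ℂ) ⊗ₖ Y α - X)ᴴ := by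
    have : ∀ α, ((1 : Matrix m m ℂ) ⊗ₖ Y α - X) * (P α ⊗ₖ (1 : Matrix k k ℂ)) * ((1 : Matrix m m ℂ) ⊗ₖ Y α - X)ᴴ
        = P α ⊗ₖ (Y α * (Y α)ᴴ) - (P α ⊗ₖ Y α) * Xᴴ - X * (P α ⊗ₖ (Y α)ᴴ)
          + X * (P α ⊗ₖ (1 : Matrix k k ℂ)) * Xᴴ := by
      intro α
      rw [conjTranspose_sub, conjTranspose_kronecker, conjTranspose_one, Matrix.sub_mul, Matrix.mul_sub,
        Matrix.sub_mul, Matrix.sub_mul, ← mul_kronecker_mul, ← mul_kronecker_mul, Matrix.mul_assoc X,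
        ← mul_kronecker_mul]
      simp only [Matrix.one_mul, Matrix.mul_one]
      abel
    simp only [this, Finset.sum_add_distrib, Finset.sum_sub_distrib, ← Finset.sum_mul, ← Finset.mul_sum,
      hone, ← hXs, ← hX, Matrix.mul_one]
    abel
  rw [e]
  exact posSemidef_sum _ fun α _ => ((hP α).kronecker PosSemidef.one).mul_mul_conjTranspose_same _

theorem kadison_trace {m k : Type*} [Fintype m] [Fintype k] [DecidableEq m] [DecidableEq k] {M : ℕ}
    (P : Fin M → Matrix m m ℂ) (hP : ∀ α, (P α).PosSemidef) (hPsum : ∑ α, P α = 1)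
    (Y : Fin M → Matrix k k ℂ) (A : Matrix (m × k) (m × k) ℂ) (hA : A.PosSemidef) :
    ((∑ α, P α ⊗ₖ Y α) * (∑ α, P α ⊗ₖ Y α)ᴴ * A).trace.re ≤
      ∑ α, (Y α * (Y α)ᴴ * ptraceFst ((P α ⊗ₖ (1 : Matrix k k ℂ)) * A)).trace.re := by
  have h := trace_mul_psd (kadison P hP hPsum Y) hA
  rw [Matrix.sub_mul, trace_sub, Finset.sum_mul, trace_sum, Complex.sub_re, Complex.re_sum] at h
  simp only [trace_kron] at h
  linarith

theorem dpi_s8 {m k : Type*} [Fintype m] [Fintype k] [DecidableEq m] [DecidableEq k] {M : ℕ}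
    (P : Fin M → Matrix m m ℂ) (hP : ∀ α, (P α).PosSemidef) (hPsum : ∑ α, P α = 1)
    (A C U V : Matrix (m × k) (m × k) ℂ) (a c : m × k → ℝ) (hA : Dec A U a) (hC : Dec C V c)
    (hAp : A.PosSemidef) (hCp : C.PosSemidef)
    (τ : ℝ) (hτ : 0 < τ) (hAC : (C - (τ : ℂ) • A).PosSemidef)
    (U' V' : Fin M → Matrix k k ℂ) (a' c' : Fin M → k → ℝ)
    (hA' : ∀ α, Dec (ptraceFst ((P α ⊗ₖ (1 : Matrix k k ℂ)) * A)) (U' α) (a' α))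
    (hC' : ∀ α, Dec (ptraceFst ((P α ⊗ₖ (1 : Matrix k k ℂ)) * C)) (V' α) (c' α)) :
    lf (Vᴴ * U) a c 0 - ∑ α, lf ((V' α)ᴴ * U' α) (a' α) (c' α) 0 ≤
      - ∑ i, Real.negMulLog (a i) - ∑ α, - ∑ i, Real.negMulLog (a' α i) := by
  have hAC' : ∀ α, (ptraceFst ((P α ⊗ₖ (1 : Matrix k k ℂ)) * C)
      - (τ : ℂ) • ptraceFst ((P α ⊗ₖ (1 : Matrix k k ℂ)) * A)).PosSemidef := by
    intro α
    have := ptraceP_psd (P α) (hP α) _ hAC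
    convert this using 1
    rw [Matrix.mul_sub, Matrix.mul_smul]
    ext i j
    simp [ptraceFst, Finset.mul_sum]
  have hq : ∀ s, 0 < s → ∑ α, qf ((V' α)ᴴ * U' α) (a' α) (c' α) s ≤ qf (Vᴴ * U) a c s := by
    intro s hs
    have hY := fun α => var_attained _ _ (U' α) (V' α) (a' α) (c' α) (hA' α).u1 (hA' α).u2 (hC' α).u1
      (hC' α).u2 (hA' α).eq (hC' α).eq s hs (hA' α).nn (hC' α).nn
    choose Y hY using hY
    have hXs : (∑ α, P α ⊗ₖ Y α)ᴴ = ∑ α, P α ⊗ₖ (Y α)ᴴ := by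
      rw [conjTranspose_sum]
      refine Finset.sum_congr rfl fun α _ => ?_
      rw [conjTranspose_kronecker, (hP α).1.eq]
    have h1 := kadison_trace P hP hPsum Y C hCp
    have h2 := kadison_trace P hP hPsum (fun α => (Y α)ᴴ) A hAp
    have h3 : ((∑ α, P α ⊗ₖ Y α)ᴴ * A).trace.re
        = ∑ α, ((Y α)ᴴ * ptraceFst ((P α ⊗ₖ (1 : Matrix k k ℂ)) * A)).trace.re := by
      rw [hXs, Finset.sum_mul, trace_sum, Complex.re_sum]
      simp only [trace_kron]
    rw [← hXs] at h2
    simp only [conjTranspose_conjTranspose] at h2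
    have h4 := var_le A C U V (∑ α, P α ⊗ₖ Y α) a c hA.u1 hA.u2 hC.u2 hA.eq hC.eq s hs hA.nn hC.nn
    refine le_trans ?_ h4
    simp only [← hY, Finset.sum_sub_distrib, ← Finset.mul_sum]
    rw [h3]
    nlinarith
  set H : ℝ → ℝ := fun s => lf (Vᴴ * U) a c s - ∑ α, lf ((V' α)ᴴ * U' α) (a' α) (c' α) s with hH
  have hd : ∀ s, 0 < s → HasDerivAt H
      (qf (Vᴴ * U) a c s - ∑ α, qf ((V' α)ᴴ * U' α) (a' α) (c' α) s) s := fun s hs =>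
    (lf_deriv _ _ _ s hs hA.nn hC.nn).fun_sub
      (HasDerivAt.fun_sum fun α _ => lf_deriv _ _ _ s hs (hA' α).nn (hC' α).nn)
  have hmono : MonotoneOn H (Set.Ici 0) := by
    refine monotoneOn_of_deriv_nonneg (convex_Ici 0) ?_ ?_ ?_
    · exact (lf_cont _ _ _ hA.nn hC.nn (supp hA hC τ hτ hAC)).sub
        (continuousOn_finsetSum _ fun α _ =>
          lf_cont _ _ _ (hA' α).nn (hC' α).nn (supp (hA' α) (hC' α) τ hτ (hAC' α)))
    · intro s hs
      rw [interior_Ici] at hs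
      exact (hd s hs).differentiableAt.differentiableWithinAt
    · intro s hs
      rw [interior_Ici] at hs
      rw [(hd s hs).deriv]
      linarith [hq s hs]
  have htr : ∑ i, a i = ∑ α, ∑ i, a' α i := by
    rw [← hA.trace]
    simp only [← fun α => (hA' α).trace]
    have : ∀ α, (ptraceFst ((P α ⊗ₖ (1 : Matrix k k ℂ)) * A)).trace = ((P α ⊗ₖ (1 : Matrix k k ℂ)) * A).trace := by
      intro α; rw [trace_kron, Matrix.one_mul]
    simp only [this]
    rw [← Complex.re_sum, ← trace_sum, ← Finset.sum_mul]
    have hone : ∑ α, P α ⊗ₖ (1 : Matrix k k ℂ) = 1 := by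
      rw [← Matrix.one_kronecker_one, ← hPsum]
      ext i j
      simp [Matrix.sum_apply, Finset.sum_mul]
    rw [hone, Matrix.one_mul]
  have hlim : Filter.Tendsto H Filter.atTop
      (nhds (- ∑ i, Real.negMulLog (a i) - ∑ α, - ∑ i, Real.negMulLog (a' α i))) := by
    have := (lf_lim (Vᴴ * U) a c hA.nn hC.nn (sum_wt _ (wt_unit hA hC))).sub
      (tendsto_finsetSum Finset.univ fun α _ =>
        lf_lim ((V' α)ᴴ * U' α) (a' α) (c' α) (hA' α).nn (hC' α).nn (sum_wt _ (wt_unit (hA' α) (hC' α))))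
    refine this.congr fun s => ?_
    simp only [Finset.sum_sub_distrib, ← Finset.sum_mul, ← htr, hH]
    ring
  refine ge_of_tendsto hlim ?_
  filter_upwards [Filter.eventually_ge_atTop 0] with s hs
  exact hmono (Set.mem_Ici.2 le_rfl) hs hs

/-- **Convexity of classical minus quantum entropy** (Corollary 6): the map
`ρ₁₂ ↦ S^{cl,Q}[ρ₁₂] − S[ρ₁₂]` is convex on density matrices. -/
theorem classical_minus_quantum_entropy_convex
    {n₁ n₂ : Type*} [Fintype n₁] [Fintype n₂]
    [DecidableEq n₁] [DecidableEq n₂] {M : ℕ}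
    (P : Fin M → Matrix n₁ n₁ ℂ) (hP : ∀ α, (P α).PosSemidef)
    (hPsum : ∑ α, P α = 1)
    (A B : Matrix (n₁ × n₂) (n₁ × n₂) ℂ)
    (hA : A.PosSemidef) (hAtr : A.trace = 1)
    (hB : B.PosSemidef) (hBtr : B.trace = 1)
    (t : ℝ) (ht0 : 0 ≤ t) (ht1 : t ≤ 1) :
    (∑ α, entropy (ptraceFst ((P α ⊗ₖ (1 : Matrix n₂ n₂ ℂ)) *
          ((t : ℂ) • A + ((1 - t : ℝ) : ℂ) • B))))
      - entropy ((t : ℂ) • A + ((1 - t : ℝ) : ℂ) • B)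
    ≤ t * ((∑ α, entropy (ptraceFst ((P α ⊗ₖ (1 : Matrix n₂ n₂ ℂ)) * A)))
            - entropy A)
      + (1 - t) * ((∑ α, entropy (ptraceFst ((P α ⊗ₖ (1 : Matrix n₂ n₂ ℂ)) * B)))
            - entropy B) := by
  rcases ht0.eq_or_lt with h0 | h0
  · subst h0; simp
  rcases ht1.eq_or_lt with h1 | h1
  · subst h1; simp
  have h1' : 0 < 1 - t := sub_pos.2 h1
  have ct : (0 : ℂ) ≤ (t : ℂ) := by exact_mod_cast ht0
  have ct' : (0 : ℂ) ≤ ((1 - t : ℝ) : ℂ) := by exact_mod_cast h1'.le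
  set C := (t : ℂ) • A + ((1 - t : ℝ) : ℂ) • B with hCdef
  have hC : C.PosSemidef := (hA.smul ct).add (hB.smul ct')
  have hCA : (C - (t : ℂ) • A).PosSemidef := by
    rw [hCdef, add_sub_cancel_left]; exact hB.smul ct'
  have hCB : (C - ((1 - t : ℝ) : ℂ) • B).PosSemidef := by
    rw [hCdef, add_sub_cancel_right]; exact hA.smul ct
  obtain ⟨U₁, a, dA, eA⟩ := exists_dec A hA
  obtain ⟨U₂, b, dB, eB⟩ := exists_dec B hB
  obtain ⟨V, c, dC, eC⟩ := exists_dec C hC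
  choose U₁' a' dA' eA' using fun α => exists_dec _ (ptraceP_psd (P α) (hP α) A hA)
  choose U₂' b' dB' eB' using fun α => exists_dec _ (ptraceP_psd (P α) (hP α) B hB)
  choose V' c' dC' eC' using fun α => exists_dec _ (ptraceP_psd (P α) (hP α) C hC)
  have k1 := dpi_s8 P hP hPsum A C U₁ V a c dA dC hA hC t h0 hCA U₁' V' a' c' dA' dC'
  have k2 := dpi_s8 P hP hPsum B C U₂ V b c dB dC hB hC (1 - t) h1' hCB U₂' V' b' c' dB' dC'
  have m := lf_mix t dA dB dC
  have hlin : ∀ α, ptraceFst ((P α ⊗ₖ (1 : Matrix n₂ n₂ ℂ)) * C)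
      = (t : ℂ) • ptraceFst ((P α ⊗ₖ (1 : Matrix n₂ n₂ ℂ)) * A)
        + ((1 - t : ℝ) : ℂ) • ptraceFst ((P α ⊗ₖ (1 : Matrix n₂ n₂ ℂ)) * B) := by
    intro α
    rw [hCdef, Matrix.mul_add, Matrix.mul_smul, Matrix.mul_smul]
    ext i j
    simp [ptraceFst, Finset.mul_sum, Finset.sum_add_distrib]
  have m' : t * ∑ α, lf ((V' α)ᴴ * U₁' α) (a' α) (c' α) 0
      + (1 - t) * ∑ α, lf ((V' α)ᴴ * U₂' α) (b' α) (c' α) 0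
      = ∑ α, - ∑ i, Real.negMulLog (c' α i) := by
    rw [Finset.mul_sum, Finset.mul_sum, ← Finset.sum_add_distrib]
    refine Finset.sum_congr rfl fun α _ => ?_
    have d := dC' α
    rw [hlin α] at d
    exact lf_mix t (dA' α) (dB' α) d
  simp only [eA', eB', eC', eA, eB, eC]
  simp only [Finset.sum_neg_distrib] at k1 k2 m'
  have k1' := mul_le_mul_of_nonneg_left k1 ht0
  have k2' := mul_le_mul_of_nonneg_left k2 h1'.le
  linarith
end
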